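/- arXiv:1009.2642 — 8 statements merged into one kernel-verified Lean document; each statement's English description precedes it below -/
import Mathlib

section
/- For positive integers a_0, …, a_d with sum n, let t be the smallest positive integer such that t divides d+1 and a_i = a_{i+t} for all 0 ≤ i ≤ d−t. Then the difference cycle (a_0 : ⋯ : a_d) contains exactly a_0 + a_1 + ⋯ + a_{t−1} = n·t/(d+1) distinct subsets. -/
/-- The difference cycle `(a 0 : a 1 : ⋯ : a d)` of dimension `d` on `n` vertices:
the collection of subsets of `ℤ/nℤ` of the form
`{i, i + a 0, i + a 0 + a 1, …, i + a 0 + ⋯ + a (d-1)}` for `i ∈ ℤ/nℤ`. -/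
def diffCycle (n d : ℕ) (a : ℕ → ℕ) : Set (Finset (ZMod n)) :=
  {s | ∃ i : ZMod n, s = (Finset.range (d + 1)).image
      (fun t => i + ((∑ r ∈ Finset.range t, a r : ℕ) : ZMod n))}

/-!
`ℤ/nℤ` acts by translation on its finite subsets and the difference cycle is one orbit, so its
length is the index of the stabilizer of the base simplex. Extend the differences to a periodic
sequence on `ℕ`: the base simplex then lifts to the set of all partial sums, and since a strictly
increasing sequence is determined by its range, translation by `g` preserves this set iff `g` is the
partial sum up to a period of the sequence. The periods are the multiples of `t`, so the stabilizer
is generated by `a 0 + ⋯ + a (t - 1)`, a divisor of `n`.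
-/

open Function Finset
open scoped Pointwise

section Periods

variable {α : Type*} {a b : ℕ → α} {m p q t : ℕ}

theorem periodic_gcd_of_periodic (hp : Periodic b p) (hq : Periodic b q) :
    Periodic b (p.gcd q) := by
  induction p, q using Nat.gcd.induction with
  | H0 q => rwa [Nat.gcd_zero_left]
  | H1 p q _ ih =>
    have hmod : Periodic b (q % p) := fun x => calc
      b (x + q % p) = b (x + q % p + q / p * p) := (hp.nat_mul (q / p) _).symm
      _ = b (x + q) := by rw [add_assoc, Nat.mod_add_div']
      _ = b x := hq x
    rw [Nat.gcd_rec]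
    exact ih hmod hp

theorem periodic_iff_dvd_of_minimal (ht : 0 < t) (htm : t ∣ m) (hbt : Periodic b t)
    (hmin : ∀ s, 0 < s → s ∣ m → Periodic b s → t ≤ s) (s : ℕ) : Periodic b s ↔ t ∣ s := by
  refine ⟨fun hs => ?_, ?_⟩
  · have hle : t ≤ t.gcd s :=
      hmin _ (Nat.gcd_pos_of_pos_left s ht) ((Nat.gcd_dvd_left t s).trans htm)
        (periodic_gcd_of_periodic hbt hs)
    exact Nat.gcd_eq_left_iff_dvd.1 ((Nat.gcd_le_left s ht).antisymm hle)
  · rintro ⟨q, rfl⟩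
    simpa only [mul_comm, Nat.cast_id] using hbt.nat_mul q

/-- The `m`-periodic sequence whose first `m` terms are those of `a`; it turns the cyclic
sequence of differences of a difference cycle into a sequence on `ℕ`. -/
def cyclicExtension (m : ℕ) (a : ℕ → α) (i : ℕ) : α :=
  a (i % m)

theorem cyclicExtension_of_lt {i : ℕ} (hi : i < m) : cyclicExtension m a i = a i := by
  rw [cyclicExtension, Nat.mod_eq_of_lt hi]

theorem periodic_cyclicExtension (m : ℕ) (a : ℕ → α) : Periodic (cyclicExtension m a) m :=
  (Nat.periodic_mod m).comp a

theorem apply_mod_of_shift_eq (ha : ∀ i, i + t < m → a i = a (i + t)) {i : ℕ} (hi : i < m) :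
    a (i % t) = a i := by
  have shift_mul (q j : ℕ) (hj : j + t * q < m) : a j = a (j + t * q) := by
    induction q with
    | zero => rfl
    | succ q ih =>
      rw [Nat.mul_succ, ← add_assoc] at hj ⊢
      rw [ih (by lia), ha _ hj]
  have hdecomp := Nat.mod_add_div i t
  rw [shift_mul (i / t) (i % t) (by rwa [hdecomp]), hdecomp]

theorem periodic_cyclicExtension_iff (hm : 0 < m) (htm : t ∣ m) :
    Periodic (cyclicExtension m a) t ↔ ∀ i, i + t < m → a i = a (i + t) := by
  refine ⟨fun h i hi => ?_, fun ha => ?_⟩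
  · rw [← cyclicExtension_of_lt (a := a) hi, h,
      cyclicExtension_of_lt (Nat.lt_of_add_right_lt hi)]
  · have hext : cyclicExtension m a = fun i => a (i % t) := by
      ext i
      rw [cyclicExtension, ← apply_mod_of_shift_eq ha (Nat.mod_lt i hm), Nat.mod_mod_of_dvd i htm]
    rw [hext]
    exact (Nat.periodic_mod t).comp a

end Periods

theorem forall_apply_add_iff_forall_mem_range_iff {f : ℕ → ℕ} (hf : StrictMono f) (s : ℕ) :
    (∀ k, f (k + s) = f k + f s) ↔ ∀ x, x + f s ∈ Set.range f ↔ x ∈ Set.range f := by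
  have exists_shift {x l : ℕ} (hl : f l = x + f s) : ∃ k, f (k + s) = x + f s := by
    have hsl : s ≤ l := hf.le_iff_le.1 (hl ▸ Nat.le_add_left _ x)
    exact ⟨l - s, by rw [Nat.sub_add_cancel hsl, hl]⟩
  constructor
  · refine fun h x => ⟨?_, ?_⟩
    · rintro ⟨l, hl⟩
      obtain ⟨k, hk⟩ := exists_shift hl
      exact ⟨k, Nat.add_right_cancel ((h k).symm.trans hk)⟩
    · rintro ⟨k, rfl⟩
      exact ⟨k + s, h k⟩
  · intro h
    have hrange : Set.range (fun k => f (k + s)) = Set.range (fun k => f k + f s) := by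
      apply Set.Subset.antisymm
      · rintro _ ⟨k, rfl⟩
        have hle : f s ≤ f (k + s) := hf.monotone (Nat.le_add_left s k)
        obtain ⟨j, hj⟩ := (h (f (k + s) - f s)).1 ⟨k + s, (Nat.sub_add_cancel hle).symm⟩
        exact ⟨j, by simp only [hj, Nat.sub_add_cancel hle]⟩
      · rintro _ ⟨k, rfl⟩
        obtain ⟨l, hl⟩ := (h (f k)).2 ⟨k, rfl⟩
        exact exists_shift hl
    have hshift : StrictMono fun k => f (k + s) := hf.comp (add_left_strictMono (a := s))
    exact congrFun ((hshift.range_inj (hf.add_const (f s))).1 hrange)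

section PartialSums

/-- The partial sum `b 0 + ⋯ + b (k - 1)`, the position of the `k`-th vertex of a simplex that
starts at `0` and has successive differences `b`. -/
def partialSum (b : ℕ → ℕ) (k : ℕ) : ℕ :=
  ∑ r ∈ range k, b r

variable {b : ℕ → ℕ} {p : ℕ}

theorem partialSum_succ (b : ℕ → ℕ) (k : ℕ) : partialSum b (k + 1) = partialSum b k + b k :=
  sum_range_succ b k

theorem partialSum_cyclicExtension {m k : ℕ} (a : ℕ → ℕ) (hk : k ≤ m) :
    partialSum (cyclicExtension m a) k = partialSum a k :=
  sum_congr rfl fun _ hi => cyclicExtension_of_lt ((mem_range.1 hi).trans_le hk)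

theorem strictMono_partialSum (hb : ∀ i, 0 < b i) : StrictMono (partialSum b) :=
  strictMono_nat_of_lt_succ fun k => by
    rw [partialSum_succ]
    exact Nat.lt_add_of_pos_right (hb k)

theorem partialSum_add_of_periodic (hp : Periodic b p) (k : ℕ) :
    partialSum b (k + p) = partialSum b k + partialSum b p := by
  simp only [partialSum]
  rw [add_comm k p, sum_range_add, add_comm]
  simp only [add_comm p, hp _]

theorem partialSum_add_mul_of_periodic (hp : Periodic b p) (k q : ℕ) :
    partialSum b (k + q * p) = partialSum b k + q * partialSum b p := by
  induction q with
  | zero => simp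
  | succ q ih =>
    rw [Nat.succ_mul, ← add_assoc, partialSum_add_of_periodic hp, ih, Nat.succ_mul, add_assoc]

theorem partialSum_mul_of_periodic (hp : Periodic b p) (q : ℕ) :
    partialSum b (q * p) = q * partialSum b p := by
  simpa [partialSum] using partialSum_add_mul_of_periodic hp 0 q

theorem mul_partialSum_of_periodic_of_dvd {m : ℕ} (hp : Periodic b p) (hpm : p ∣ m) :
    m * partialSum b p = partialSum b m * p := by
  obtain ⟨c, rfl⟩ := hpm
  rw [mul_comm p c, partialSum_mul_of_periodic hp, mul_right_comm]

theorem periodic_iff_partialSum_add {s : ℕ} :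
    Periodic b s ↔ ∀ k, partialSum b (k + s) = partialSum b k + partialSum b s := by
  refine ⟨partialSum_add_of_periodic, fun h k => ?_⟩
  have hk := h (k + 1)
  rw [add_right_comm, partialSum_succ, partialSum_succ, h k] at hk
  lia

theorem periodic_iff_range_partialSum_shift (hb : ∀ i, 0 < b i) (s : ℕ) :
    Periodic b s ↔
      ∀ x, x + partialSum b s ∈ Set.range (partialSum b) ↔ x ∈ Set.range (partialSum b) := by
  rw [periodic_iff_partialSum_add,
    forall_apply_add_iff_forall_mem_range_iff (strictMono_partialSum hb)]

end PartialSums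

section DifferenceCycles

/-- The member of `diffCycle n d a` with `i = 0`. -/
def baseSimplex (n d : ℕ) (a : ℕ → ℕ) : Finset (ZMod n) :=
  (range (d + 1)).image fun k => (partialSum a k : ZMod n)

theorem diffCycle_eq_orbit (n d : ℕ) (a : ℕ → ℕ) :
    diffCycle n d a = AddAction.orbit (ZMod n) (baseSimplex n d a) := by
  ext s
  simp only [diffCycle, baseSimplex, partialSum, AddAction.mem_orbit_iff, Set.mem_ofPred_eq,
    ← image_vadd, image_image, comp_def, vadd_eq_add, eq_comm]

theorem diffCycle_cyclicExtension (n d : ℕ) (a : ℕ → ℕ) :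
    diffCycle n d (cyclicExtension (d + 1) a) = diffCycle n d a := by
  have hbase : baseSimplex n d (cyclicExtension (d + 1) a) = baseSimplex n d a :=
    image_congr fun k hk => by
      simp only [partialSum_cyclicExtension a (mem_range.1 hk).le]
  rw [diffCycle_eq_orbit, diffCycle_eq_orbit, hbase]

variable {n d t : ℕ} {b : ℕ → ℕ}

theorem natCast_mem_baseSimplex_iff (hb : ∀ i, 0 < b i) (hper : Periodic b (d + 1))
    (hn : partialSum b (d + 1) = n) (x : ℕ) :
    (x : ZMod n) ∈ baseSimplex n d b ↔ x ∈ Set.range (partialSum b) := by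
  have hshift (k q : ℕ) : partialSum b (k + q * (d + 1)) = partialSum b k + q * n := by
    rw [partialSum_add_mul_of_periodic hper, hn]
  simp only [baseSimplex, mem_image, mem_range]
  constructor
  · rintro ⟨k, hk, hkx⟩
    have hlt : partialSum b k < n := hn ▸ strictMono_partialSum hb hk
    have hmod : partialSum b k = x % n := by
      rw [← Nat.mod_eq_of_lt hlt]
      exact (ZMod.natCast_eq_natCast_iff' _ _ _).1 hkx
    exact ⟨k + x / n * (d + 1), by rw [hshift, hmod, Nat.mod_add_div']⟩
  · rintro ⟨k, rfl⟩
    refine ⟨k % (d + 1), Nat.mod_lt k d.succ_pos, ?_⟩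
    conv_rhs => rw [← Nat.mod_add_div' k (d + 1), hshift]
    simp

theorem natCast_mem_stabilizer_baseSimplex_iff [NeZero n] (hb : ∀ i, 0 < b i)
    (hper : Periodic b (d + 1)) (hn : partialSum b (d + 1) = n) (g : ℕ) :
    (g : ZMod n) ∈ AddAction.stabilizer (ZMod n) (baseSimplex n d b) ↔
      ∃ s, Periodic b s ∧ partialSum b s = g := by
  have hmem := natCast_mem_baseSimplex_iff hb hper hn
  have hstab : (g : ZMod n) ∈ AddAction.stabilizer (ZMod n) (baseSimplex n d b) ↔
      ∀ x, x + g ∈ Set.range (partialSum b) ↔ x ∈ Set.range (partialSum b) := by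
    simp only [AddAction.mem_stabilizer_finset, ZMod.natCast_zmod_surjective.forall, vadd_eq_add,
      ← Nat.cast_add, hmem, add_comm g]
  rw [hstab]
  constructor
  · intro h
    obtain ⟨s, hs⟩ := (h 0).2 ⟨0, rfl⟩
    rw [zero_add] at hs
    subst hs
    exact ⟨s, (periodic_iff_range_partialSum_shift hb s).2 h, rfl⟩
  · rintro ⟨s, hs, rfl⟩
    exact (periodic_iff_range_partialSum_shift hb s).1 hs

theorem stabilizer_baseSimplex [NeZero n] (hb : ∀ i, 0 < b i) (hper : Periodic b (d + 1))
    (hn : partialSum b (d + 1) = n) (ht : ∀ s, Periodic b s ↔ t ∣ s) :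
    AddAction.stabilizer (ZMod n) (baseSimplex n d b) =
      AddSubgroup.zmultiples (partialSum b t : ZMod n) := by
  have hmem := natCast_mem_stabilizer_baseSimplex_iff hb hper hn
  have hbt : Periodic b t := (ht t).2 dvd_rfl
  apply le_antisymm
  · intro g hg
    obtain ⟨g, rfl⟩ := ZMod.natCast_zmod_surjective g
    obtain ⟨s, hs, rfl⟩ := (hmem g).1 hg
    obtain ⟨q, rfl⟩ := (ht s).1 hs
    rw [mul_comm, partialSum_mul_of_periodic hbt, Nat.cast_mul, ← nsmul_eq_mul]
    exact AddSubgroup.nsmul_mem_zmultiples _ q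
  · exact AddSubgroup.zmultiples_le_of_mem ((hmem _).2 ⟨t, hbt, rfl⟩)

theorem index_zmultiples_natCast_of_dvd [NeZero n] {x : ℕ} (hx : x ∣ n) :
    (AddSubgroup.zmultiples (x : ZMod n)).index = x := by
  have hn : n ≠ 0 := NeZero.ne n
  have hcard : Nat.card (AddSubgroup.zmultiples (x : ZMod n)) = n / x := by
    rw [Nat.card_zmultiples, ZMod.addOrderOf_coe x hn, Nat.gcd_eq_right hx]
  have hindex := (AddSubgroup.zmultiples (x : ZMod n)).card_mul_index
  rw [hcard, Nat.card_zmod] at hindex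
  exact Nat.eq_of_mul_eq_mul_left (Nat.div_pos (Nat.le_of_dvd hn.bot_lt hx)
    (Nat.pos_of_dvd_of_pos hx hn.bot_lt)) (hindex.trans (Nat.div_mul_cancel hx).symm)

theorem ncard_diffCycle_of_periodic (hb : ∀ i, 0 < b i) (hper : Periodic b (d + 1))
    (hn : partialSum b (d + 1) = n) (ht : ∀ s, Periodic b s ↔ t ∣ s) :
    (diffCycle n d b).ncard = partialSum b t := by
  have : NeZero n := ⟨hn ▸ (strictMono_partialSum hb d.succ_pos).ne_bot⟩
  have hdvd : partialSum b t ∣ n := by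
    obtain ⟨c, hc⟩ := (ht _).1 hper
    rw [← hn, hc, mul_comm, partialSum_mul_of_periodic ((ht t).2 dvd_rfl)]
    exact Dvd.intro_left c rfl
  rw [diffCycle_eq_orbit, ← AddAction.index_stabilizer, stabilizer_baseSimplex hb hper hn ht,
    index_zmultiples_natCast_of_dvd hdvd]

end DifferenceCycles

/-- For positive integers `a 0, …, a d` with sum `n`, if `t` is the smallest positive
integer with `t ∣ d + 1` and `a i = a (i + t)` for all `0 ≤ i ≤ d − t`, then the
difference cycle `(a 0 : ⋯ : a d)` has exactly `a 0 + ⋯ + a (t-1) = n·t/(d+1)` members. -/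
theorem stmt_0 (n d t : ℕ) (a : ℕ → ℕ)
    (hpos : ∀ i ≤ d, 0 < a i)
    (hsum : ∑ i ∈ Finset.range (d + 1), a i = n)
    (ht : 0 < t) (htd : t ∣ (d + 1))
    (hper : ∀ i, i + t ≤ d → a i = a (i + t))
    (hmin : ∀ t', 0 < t' → t' ∣ (d + 1) → (∀ i, i + t' ≤ d → a i = a (i + t')) → t ≤ t') :
    (diffCycle n d a).ncard = ∑ i ∈ Finset.range t, a i ∧
      (d + 1) * ∑ i ∈ Finset.range t, a i = n * t := by
  have hbpos (i : ℕ) : 0 < cyclicExtension (d + 1) a i :=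
    hpos _ (Nat.le_of_lt_succ (Nat.mod_lt i d.succ_pos))
  have hperiodic {s : ℕ} (hs : s ∣ d + 1) :
      Periodic (cyclicExtension (d + 1) a) s ↔ ∀ i, i + s ≤ d → a i = a (i + s) := by
    simpa only [Nat.lt_succ_iff] using periodic_cyclicExtension_iff (a := a) d.succ_pos hs
  have hbt := (hperiodic htd).2 hper
  have hn : partialSum (cyclicExtension (d + 1) a) (d + 1) = n :=
    (partialSum_cyclicExtension a le_rfl).trans hsum
  have hpt : partialSum (cyclicExtension (d + 1) a) t = ∑ i ∈ Finset.range t, a i :=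
    partialSum_cyclicExtension a (Nat.le_of_dvd d.succ_pos htd)
  rw [← diffCycle_cyclicExtension, ← hpt]
  constructor
  · exact ncard_diffCycle_of_periodic hbpos (periodic_cyclicExtension _ a) hn <|
      periodic_iff_dvd_of_minimal ht htd hbt fun s hs hsd h => hmin s hs hsd ((hperiodic hsd).1 h)
  · rw [← hn]
    exact mul_partialSum_of_periodic_of_dvd hbt htd
end

section
/- Let k ≥ 3 and let a, b, c be positive integers with a + b + c = 2k. Then the difference cycle (a : b : c) on ℤ/2kℤ is contained in skel₂(β^k) if and only if k ∉ {a, b, a + b}. Moreover, every member of skel₂(β^k) belongs to some such difference cycle, so skel₂(β^k) is a union of difference cycles. -/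
/-- The difference cycle `(a : b : c)` (with `c = n - a - b`) on `ℤ/nℤ`:
the collection of subsets of the form `{i, i + a, i + a + b}` for `i ∈ ℤ/nℤ`. -/
def dc (n a b : ℕ) : Set (Finset (ZMod n)) :=
  {s | ∃ i : ZMod n, s = {i, i + (a : ZMod n), i + (a : ZMod n) + (b : ZMod n)}}

/-- The 2-skeleton of the `k`-dimensional cross polytope: all 3-element subsets of
`ℤ/2kℤ` containing no pair of the form `{i, i + k}` (a diagonal). -/
def skel2 (k : ℕ) : Set (Finset (ZMod (2 * k))) :=
  {s | s.card = 3 ∧ ∀ i : ZMod (2 * k), ¬(i ∈ s ∧ i + (k : ZMod (2 * k)) ∈ s)}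

/-!
Every triple in `(a : b : c)` is a translate of `{0, a, a + b}`, so up to sign its differences are
`a`, `b` and `a + b`, all strictly between `0` and `2k`. As `k` is its own negative in `ℤ/2kℤ`, the
triple contains a diagonal exactly when one of these numbers is `k`. Conversely, measuring the
other two points of a 3-element subset from any one of them exhibits it as a member of a
difference cycle.
-/

theorem exists_add_mem_triple_iff {G : Type*} [AddGroup G] [DecidableEq G] {d x y z : G}
    (hd : d ≠ 0) (hdd : d + d = 0) :
    (∃ i, i ∈ ({x, y, z} : Finset G) ∧ i + d ∈ ({x, y, z} : Finset G)) ↔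
      x + d = y ∨ y + d = z ∨ x + d = z := by
  have add_eq_comm (u v : G) : u + d = v ↔ v + d = u := by
    rw [← eq_sub_iff_add_eq, sub_eq_add_neg, neg_eq_of_add_eq_zero_left hdd, eq_comm]
  simp only [Finset.mem_insert, Finset.mem_singleton, exists_eq_or_imp, exists_eq_left,
    add_eq_left, hd, false_or, or_false, add_eq_comm y x, add_eq_comm z x, add_eq_comm z y]
  tauto

theorem card_eq_three_of_mem_dc {n a b : ℕ} {s : Finset (ZMod n)} (ha : 0 < a) (hb : 0 < b)
    (hab : a + b < n) (hs : s ∈ dc n a b) : s.card = 3 := by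
  obtain ⟨i, rfl⟩ := hs
  have cast_ne_zero {m : ℕ} (hm : 0 < m) (hmn : m < n) : (m : ZMod n) ≠ 0 := by
    simpa only [ne_eq, ZMod.natCast_eq_zero_iff] using Nat.not_dvd_of_pos_of_lt hm hmn
  refine Finset.card_eq_three.2 ⟨_, _, _, ?_, ?_, ?_, rfl⟩
  · simpa only [ne_eq, left_eq_add] using cast_ne_zero ha (by omega)
  · simpa only [ne_eq, add_assoc, left_eq_add, Nat.cast_add] using
      cast_ne_zero (Nat.add_pos_left ha b) hab
  · simpa only [ne_eq, left_eq_add] using cast_ne_zero hb (by omega)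

theorem exists_mem_dc_of_card_eq_three {n : ℕ} [NeZero n] {s : Finset (ZMod n)}
    (hs : s.card = 3) :
    ∃ a b : ℕ, 0 < a ∧ 0 < b ∧ a + b < n ∧ s ∈ dc n a b := by
  obtain ⟨x, y, z, hxy, hxz, hyz, rfl⟩ := Finset.card_eq_three.1 hs
  wlog h_lt : (y - x).val < (z - x).val generalizing y z
  · rw [Finset.pair_comm y z] at hs ⊢
    have h_ne : (z - x).val ≠ (y - x).val :=
      (ZMod.val_injective n).ne (sub_left_injective.ne hyz.symm)
    exact this z y hxz hxy hyz.symm hs (h_ne.lt_of_le (not_lt.1 h_lt))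
  have y_pos : 0 < (y - x).val := ZMod.val_pos.2 (sub_ne_zero.2 hxy.symm)
  have z_lt : (z - x).val < n := ZMod.val_lt _
  refine ⟨(y - x).val, (z - x).val - (y - x).val, y_pos, Nat.sub_pos_of_lt h_lt, by omega, x, ?_⟩
  simp only [Nat.cast_sub h_lt.le, ZMod.natCast_zmod_val, add_sub_cancel, sub_sub_sub_cancel_right]

theorem mem_skel2_iff_of_mem_dc {k a b : ℕ} {s : Finset (ZMod (2 * k))} (ha : 0 < a) (hb : 0 < b)
    (hab : a + b < 2 * k) (hs : s ∈ dc (2 * k) a b) :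
    s ∈ skel2 k ↔ ¬(k = a ∨ k = b ∨ k = a + b) := by
  have card_s : s.card = 3 := card_eq_three_of_mem_dc ha hb hab hs
  obtain ⟨i, rfl⟩ := hs
  have cast_inj {m : ℕ} (hm : m < 2 * k) : (k : ZMod (2 * k)) = m ↔ k = m :=
    (CharP.natCast_injOn_Iio (ZMod (2 * k)) (2 * k)).eq_iff
      (Set.mem_Iio.2 (by omega)) (Set.mem_Iio.2 hm)
  have k_ne_zero : (k : ZMod (2 * k)) ≠ 0 := by
    simpa only [Nat.cast_zero] using (cast_inj (m := 0) (by omega)).not.2 (by omega)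
  have k_add_k : (k : ZMod (2 * k)) + k = 0 := by
    rw [← two_mul]
    exact_mod_cast ZMod.natCast_self (2 * k)
  have diagonal_iff := exists_add_mem_triple_iff (x := i) (y := i + a) (z := i + a + b)
    k_ne_zero k_add_k
  have sum_iff : i + k = i + a + b ↔ k = a + b := by
    rw [add_assoc, add_right_inj, ← Nat.cast_add, cast_inj hab]
  rw [add_right_inj, add_right_inj, sum_iff, cast_inj (m := a) (by omega),
    cast_inj (m := b) (by omega)] at diagonal_iff
  rw [← diagonal_iff, not_exists]
  exact and_iff_right card_s

theorem dc_subset_skel2_iff {k a b : ℕ} (ha : 0 < a) (hb : 0 < b) (hab : a + b < 2 * k) :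
    dc (2 * k) a b ⊆ skel2 k ↔ ¬(k = a ∨ k = b ∨ k = a + b) := by
  constructor
  · intro h_subset
    have base_mem : {0, 0 + (a : ZMod (2 * k)), 0 + (a : ZMod (2 * k)) + b} ∈ dc (2 * k) a b :=
      ⟨0, rfl⟩
    exact (mem_skel2_iff_of_mem_dc ha hb hab base_mem).1 (h_subset base_mem)
  · intro h s hs
    exact (mem_skel2_iff_of_mem_dc ha hb hab hs).2 h

/-- A difference cycle `(a : b : c)` with `a + b + c = 2k` is contained in
`skel₂(β^k)` iff `k ∉ {a, b, a + b}`; moreover every member of `skel₂(β^k)` lies in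
some such difference cycle, so `skel₂(β^k)` is a union of difference cycles. -/
theorem stmt_2 (k : ℕ) (hk : 3 ≤ k) :
    (∀ a b c : ℕ, 0 < a → 0 < b → 0 < c → a + b + c = 2 * k →
      (dc (2 * k) a b ⊆ skel2 k ↔ ¬(k = a ∨ k = b ∨ k = a + b))) ∧
    (∀ s ∈ skel2 k, ∃ a b c : ℕ, 0 < a ∧ 0 < b ∧ 0 < c ∧ a + b + c = 2 * k ∧
      ¬(k = a ∨ k = b ∨ k = a + b) ∧ s ∈ dc (2 * k) a b) := by
  constructor
  · intro a b c ha hb hc habc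
    exact dc_subset_skel2_iff ha hb (by omega)
  · intro s hs
    have : NeZero (2 * k) := ⟨by omega⟩
    obtain ⟨a, b, ha, hb, hab, hs_dc⟩ := exists_mem_dc_of_card_eq_three hs.1
    exact ⟨a, b, 2 * k - (a + b), ha, hb, by omega, by omega,
      (mem_skel2_iff_of_mem_dc ha hb hab hs_dc).1 hs, hs_dc⟩
end

section
/- Let k ≥ 3 and let l, j be integers with 0 < l < j < 2k − l − j and k ∉ {l, j, l + j}. Then the elements l, j, l+j, 2k−l, 2k−j, 2k−l−j of ℤ/2kℤ are pairwise distinct and nonzero, the set of vertices v such that {0, v} is contained in some member of S_{l,j,2k} is exactly {l, j, l+j, 2k−l, 2k−j, 2k−l−j}, and the pairs {v, w} of such vertices with {0, v, w} ∈ S_{l,j,2k} are exactly {l, l+j}, {l+j, j}, {j, 2k−l}, {2k−l, 2k−l−j}, {2k−l−j, 2k−j}, {2k−j, l}; that is, the link of the vertex 0 in S_{l,j,2k} is a 6-cycle. -/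
/-- `S_{l,j,2k}`: the union of the difference cycles `(l : j : 2k−l−j)` and
`(l : 2k−l−j : j)` on `ℤ/2kℤ`. -/
def Sljn (k l j : ℕ) : Set (Finset (ZMod (2 * k))) :=
  dc (2 * k) l j ∪ dc (2 * k) l (2 * k - l - j)

/-!
The triangles `{i, i + a, i + a + b}` and `{i, i + a, i - b}` are the images of the upward and
downward triangles of the triangular lattice `ℤ²` under `(x, y) ↦ x a + y b`. Six lattice triangles
meet at the origin, so the link of `0` is the image of a hexagon, and it remains to see that its six
vertices `±a, ±b, ±(a + b)` stay nonzero and distinct, that is, that `a`, `b` and `-(a + b)` are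
distinct and none of them is its own negative. For `a = l` and `b = j` in `ℤ/2kℤ` with `l < j`, this
holds because `2l`, `2j`, `2(l + j)`, `2l + j` and `l + 2j` lie strictly between `0` and `4k` and
differ from `2k`.
-/

section TriangularLattice

variable {G : Type*} [AddCommGroup G] [DecidableEq G] {a b : G}

/-- The difference cycle `(a : b : -a - b)` in an abelian group, that is, the set of translates of
the triangle `{0, a, a + b}`. In `ℤ/nℤ` it is `dc`. -/
def differenceCycle (a b : G) : Set (Finset G) :=
  {s | ∃ i : G, s = {i, i + a, i + a + b}}

/-- The union of the difference cycles `(a : b : -a - b)` and `(a : -a - b : b)`: the triangular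
lattice spanned by `a` and `b`, with both orientations of triangles. It generalizes `S_{l,j,2k}`. -/
def latticeTriangles (a b : G) : Set (Finset G) :=
  differenceCycle a b ∪ differenceCycle a (-a - b)

/-- The vertices of the hexagon surrounding `0` in the triangular lattice spanned by `a` and `b`. -/
def hexagonVertices (a b : G) : Finset G :=
  {a, b, a + b, -a, -b, -a - b}

/-- The edges of the hexagon surrounding `0` in the triangular lattice spanned by `a` and `b`,
as unordered pairs listed in cyclic order. -/
def hexagonEdges (a b : G) : Finset (Finset G) :=
  {{a, a + b}, {a + b, b}, {b, -a}, {-a, -a - b}, {-a - b, -b}, {-b, a}}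

theorem mem_differenceCycle_and_zero_mem_iff {s : Finset G} :
    s ∈ differenceCycle a b ∧ 0 ∈ s ↔
      s = {0, a, a + b} ∨ s = {0, b, -a} ∨ s = {0, -a - b, -b} := by
  have translate_neg_a : ({-a, -a + a, -a + a + b} : Finset G) = {0, b, -a} := by grind
  have translate_neg_a_sub_b :
      ({-a - b, -a - b + a, -a - b + a + b} : Finset G) = {0, -a - b, -b} := by grind
  constructor
  · rintro ⟨⟨i, rfl⟩, hzero⟩
    obtain rfl | rfl | rfl : i = 0 ∨ i = -a ∨ i = -a - b := by
      simp only [Finset.mem_insert, Finset.mem_singleton] at hzero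
      grind
    · simp
    · exact .inr (.inl translate_neg_a)
    · exact .inr (.inr translate_neg_a_sub_b)
  · rintro (rfl | rfl | rfl)
    · exact ⟨⟨0, by simp⟩, by simp⟩
    · exact ⟨⟨-a, translate_neg_a.symm⟩, by simp⟩
    · exact ⟨⟨-a - b, translate_neg_a_sub_b.symm⟩, by simp⟩

theorem mem_latticeTriangles_and_zero_mem_iff {s : Finset G} :
    s ∈ latticeTriangles a b ∧ 0 ∈ s ↔ ∃ e ∈ hexagonEdges a b, s = insert 0 e := by
  rw [latticeTriangles, Set.mem_union, or_and_right, mem_differenceCycle_and_zero_mem_iff,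
    mem_differenceCycle_and_zero_mem_iff]
  have add_neg_sub : a + (-a - b) = -b := by abel
  have neg_sub_neg_sub : -a - (-a - b) = b := by abel
  have neg_neg_sub : -(-a - b) = a + b := by abel
  simp only [add_neg_sub, neg_sub_neg_sub, neg_neg_sub, hexagonEdges, Finset.exists_mem_insert,
    Finset.mem_singleton, exists_eq_left, Finset.pair_comm a (-b), Finset.pair_comm b (a + b),
    Finset.pair_comm (-a - b) (-a)]
  tauto

theorem mem_hexagonVertices_iff_exists_edge {v : G} :
    v ∈ hexagonVertices a b ↔ ∃ e ∈ hexagonEdges a b, v ∈ e := by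
  simp only [hexagonEdges, Finset.exists_mem_insert, Finset.mem_singleton, exists_eq_left]
  simp only [hexagonVertices, Finset.mem_insert, Finset.mem_singleton]
  tauto

theorem neighbors_zero_latticeTriangles (hzero : 0 ∉ hexagonVertices a b) :
    {v | v ≠ 0 ∧ ∃ s ∈ latticeTriangles a b, 0 ∈ s ∧ v ∈ s} = ↑(hexagonVertices a b) := by
  ext v
  calc (v ≠ 0 ∧ ∃ s ∈ latticeTriangles a b, 0 ∈ s ∧ v ∈ s)
      ↔ v ≠ 0 ∧ ∃ s, (∃ e ∈ hexagonEdges a b, s = insert 0 e) ∧ v ∈ s := by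
        simp only [← mem_latticeTriangles_and_zero_mem_iff, and_assoc]
    _ ↔ v ≠ 0 ∧ ∃ e ∈ hexagonEdges a b, v ∈ e := by grind
    _ ↔ v ∈ (hexagonVertices a b : Set G) := by
        rw [← mem_hexagonVertices_iff_exists_edge, Finset.mem_coe]
        exact and_iff_right_of_imp (ne_of_mem_of_not_mem · hzero)

theorem insert_zero_mem_latticeTriangles_iff (hzero : 0 ∉ hexagonVertices a b) {e : Finset G}
    (he : 0 ∉ e) : insert 0 e ∈ latticeTriangles a b ↔ e ∈ hexagonEdges a b := by
  have zero_notMem_edge : ∀ f ∈ hexagonEdges a b, 0 ∉ f := fun f hf h =>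
    hzero (mem_hexagonVertices_iff_exists_edge.mpr ⟨f, hf, h⟩)
  rw [← and_iff_left (a := _ ∈ latticeTriangles a b) (Finset.mem_insert_self 0 e),
    mem_latticeTriangles_and_zero_mem_iff]
  constructor
  · rintro ⟨f, hf, hef⟩
    rwa [← Finset.erase_insert he, hef, Finset.erase_insert (zero_notMem_edge f hf)]
  · exact fun h => ⟨e, h, rfl⟩

theorem zero_notMem_hexagonVertices (ha : a ≠ 0) (hb : b ≠ 0) (hab : a + b ≠ 0) :
    0 ∉ hexagonVertices a b := by
  simp only [hexagonVertices, Finset.mem_insert, Finset.mem_singleton]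
  grind

theorem card_hexagonVertices (hne : a ≠ b) (ha : a + a ≠ 0) (hb : b + b ≠ 0)
    (hab : a + b + (a + b) ≠ 0) (haab : a + a + b ≠ 0) (habb : a + b + b ≠ 0) :
    (hexagonVertices a b).card = 6 := by
  have nodup : [a, b, a + b, -a, -b, -a - b].Nodup := by
    simp only [List.nodup_cons, List.mem_cons, List.not_mem_nil, or_false]
    grind (splits := 16)
  simpa [hexagonVertices] using List.toFinset_card_of_nodup nodup

theorem stmt_5_general (hne : a ≠ b) (ha : a + a ≠ 0) (hb : b + b ≠ 0)
    (hab : a + b + (a + b) ≠ 0) (haab : a + a + b ≠ 0) (habb : a + b + b ≠ 0) :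
    (hexagonVertices a b).card = 6 ∧ 0 ∉ hexagonVertices a b ∧
    {v | v ≠ 0 ∧ ∃ s ∈ latticeTriangles a b, 0 ∈ s ∧ v ∈ s} = ↑(hexagonVertices a b) ∧
    ∀ v w : G, v ≠ 0 → w ≠ 0 →
      ({0, v, w} ∈ latticeTriangles a b ↔ {v, w} ∈ hexagonEdges a b) := by
  have hzero : 0 ∉ hexagonVertices a b :=
    zero_notMem_hexagonVertices (by grind) (by grind) (by grind)
  exact ⟨card_hexagonVertices hne ha hb hab haab habb, hzero,
    neighbors_zero_latticeTriangles hzero, fun v w hv hw =>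
      insert_zero_mem_latticeTriangles_iff hzero (by simp [hv.symm, hw.symm])⟩

end TriangularLattice

section ZMod

variable {n l j : ℕ}

theorem natCast_self_sub (h : l ≤ n) : ((n - l : ℕ) : ZMod n) = -l := by
  rw [Nat.cast_sub h, ZMod.natCast_self, zero_sub]

theorem natCast_self_sub_sub (h : l + j ≤ n) : ((n - l - j : ℕ) : ZMod n) = -l - j := by
  rw [Nat.sub_sub, natCast_self_sub h, Nat.cast_add, neg_add']

theorem natCast_ne_zero_of_lt_two_mul {m : ℕ} (hpos : 0 < m) (hlt : m < 2 * n) (hne : m ≠ n) :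
    (m : ZMod n) ≠ 0 := by
  rw [Ne, ZMod.natCast_eq_zero_iff]
  exact fun hdvd => hne (Nat.eq_of_dvd_of_lt_two_mul hpos.ne' hdvd hlt)

theorem Sljn_eq_latticeTriangles {k : ℕ} (h : l + j ≤ 2 * k) :
    Sljn k l j = latticeTriangles (l : ZMod (2 * k)) j := by
  simp only [Sljn, dc, latticeTriangles, differenceCycle, natCast_self_sub_sub h]

end ZMod

/-- For `0 < l < j < 2k−l−j` with `k ∉ {l, j, l+j}`: the six elements
`l, j, l+j, 2k−l, 2k−j, 2k−l−j` of `ℤ/2kℤ` are pairwise distinct and nonzero, they are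
exactly the vertices joined to `0` in `S_{l,j,2k}`, and the link of `0` is the 6-cycle
`l, l+j, j, 2k−l, 2k−l−j, 2k−j, l`. -/
theorem stmt_5 (k l j : ℕ) (hk : 3 ≤ k)
    (hl : 0 < l) (hlj : l < j) (hj : l + 2 * j < 2 * k)
    (h1 : k ≠ l) (h2 : k ≠ j) (h3 : k ≠ l + j) :
    let V : Finset (ZMod (2 * k)) :=
      {(l : ZMod (2 * k)), (j : ZMod (2 * k)), ((l + j : ℕ) : ZMod (2 * k)),
       ((2 * k - l : ℕ) : ZMod (2 * k)), ((2 * k - j : ℕ) : ZMod (2 * k)),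
       ((2 * k - l - j : ℕ) : ZMod (2 * k))}
    V.card = 6 ∧ (0 : ZMod (2 * k)) ∉ V ∧
    {v : ZMod (2 * k) | v ≠ 0 ∧ ∃ s ∈ Sljn k l j, 0 ∈ s ∧ v ∈ s} = ↑V ∧
    (∀ v w : ZMod (2 * k), v ≠ 0 → w ≠ 0 → v ≠ w →
      (({0, v, w} : Finset (ZMod (2 * k))) ∈ Sljn k l j ↔
        ({v, w} : Finset (ZMod (2 * k))) ∈
          ({{(l : ZMod (2 * k)), ((l + j : ℕ) : ZMod (2 * k))},
            {((l + j : ℕ) : ZMod (2 * k)), (j : ZMod (2 * k))},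
            {(j : ZMod (2 * k)), ((2 * k - l : ℕ) : ZMod (2 * k))},
            {((2 * k - l : ℕ) : ZMod (2 * k)), ((2 * k - l - j : ℕ) : ZMod (2 * k))},
            {((2 * k - l - j : ℕ) : ZMod (2 * k)), ((2 * k - j : ℕ) : ZMod (2 * k))},
            {((2 * k - j : ℕ) : ZMod (2 * k)), (l : ZMod (2 * k))}} :
            Finset (Finset (ZMod (2 * k)))))) := by
  have hle : l + j ≤ 2 * k := by omega
  have l_ne_j : (l : ZMod (2 * k)) ≠ j :=
    (CharP.natCast_injOn_Iio (ZMod (2 * k)) (2 * k)).ne (by simp; omega) (by simp; omega) hlj.ne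
  obtain ⟨hcard, hzero, hneighbors, hlink⟩ := stmt_5_general l_ne_j
    (mod_cast natCast_ne_zero_of_lt_two_mul (m := l + l) (by omega) (by omega) (by omega))
    (mod_cast natCast_ne_zero_of_lt_two_mul (m := j + j) (by omega) (by omega) (by omega))
    (mod_cast natCast_ne_zero_of_lt_two_mul (m := l + j + (l + j)) (by omega) (by omega) (by omega))
    (mod_cast natCast_ne_zero_of_lt_two_mul (m := l + l + j) (by omega) (by omega) (by omega))
    (mod_cast natCast_ne_zero_of_lt_two_mul (m := l + j + j) (by omega) (by omega) (by omega))
  rw [Sljn_eq_latticeTriangles hle, Nat.cast_add, natCast_self_sub_sub hle,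
    natCast_self_sub (by omega : l ≤ 2 * k), natCast_self_sub (by omega : j ≤ 2 * k)]
  exact ⟨hcard, hzero, hneighbors, fun v w hv hw _ => hlink v w hv hw⟩
end

section
/- Let k ≥ 3 and let l, j be integers with 0 < l < j < 2k − l − j and k ∉ {l, j, l + j}. Then every 2-element subset of ℤ/2kℤ contained in some member of S_{l,j,2k} is contained in exactly two members of S_{l,j,2k}; moreover S_{l,j,2k} has exactly 4k members (triangles) and exactly 6k such 2-element subsets (edges), so its Euler characteristic 2k − 6k + 4k equals 0. -/
/-- The edges of the pure two-dimensional complex with set of triangles `S`: the two-element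
subsets of members of `S`. -/
def edges {α : Type*} (S : Set (Finset α)) : Set (Finset α) :=
  {e | e.card = 2 ∧ ∃ s ∈ S, e ⊆ s}

theorem eq_pair_of_card_eq_two_of_subset {α : Type*} [DecidableEq α] {p q r : α} {e : Finset α}
    (he : e.card = 2) (hs : e ⊆ {p, q, r}) : e = {p, q} ∨ e = {q, r} ∨ e = {p, r} := by
  obtain ⟨x, y, hxy, rfl⟩ := Finset.card_eq_two.1 he
  simp only [Finset.insert_subset_iff, Finset.singleton_subset_iff, Finset.mem_insert,
    Finset.mem_singleton] at hs
  obtain ⟨rfl | rfl | rfl, rfl | rfl | rfl⟩ := hs <;> simp_all [Finset.pair_comm]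

section DifferencePair

variable {G : Type*} [AddGroup G] [DecidableEq G]

/-- The translate by `x` of the edge `{0, d}`. -/
def differencePair (d x : G) : Finset G := {x, x + d}

theorem differencePair_subset_iff {d x : G} {s : Finset G} :
    differencePair d x ⊆ s ↔ x ∈ s ∧ x + d ∈ s := by
  simp only [differencePair, Finset.insert_subset_iff, Finset.singleton_subset_iff]

theorem differencePair_neg (d x : G) : differencePair (-d) (x + d) = differencePair d x := by
  rw [differencePair, add_neg_cancel_right, Finset.pair_comm, differencePair]

theorem card_differencePair {d : G} (hd : d ≠ 0) (x : G) : (differencePair d x).card = 2 :=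
  Finset.card_pair (by simpa using hd)

theorem differencePair_injOn {D : Set G} (hD : ∀ d ∈ D, ∀ d' ∈ D, d + d' ≠ 0) :
    Set.InjOn (fun p : G × G ↦ differencePair p.1 p.2) (D ×ˢ Set.univ) := by
  rintro ⟨d, x⟩ ⟨hd, -⟩ ⟨d', x'⟩ ⟨hd', -⟩ (h : differencePair d x = differencePair d' x')
  have h_coe : ({x, x + d} : Set G) = {x', x' + d'} := by
    simpa [differencePair] using congrArg ((↑) : Finset G → Set G) h
  rcases Set.pair_eq_pair_iff.1 h_coe with ⟨rfl, h_add⟩ | ⟨rfl, h_add⟩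
  · rw [add_left_cancel h_add]
  · refine absurd ?_ (hD d' hd' d hd)
    rwa [add_assoc, add_eq_left] at h_add

end DifferencePair

section TorusPair

variable {G : Type*} [AddCommGroup G] {a b : G}

/-- The condition on the differences `a`, `b`, `c = -(a + b)` that makes every edge of
`torusTriangles a b` lie on exactly two triangles: the six elements `±a`, `±b`, `±c` are pairwise
distinct. It is encoded by `a`, `b`, `c` being distinct and none of
them being its own negative, since a coincidence such as `a = -b` means `c = 0 = -c`. -/
structure IsTorusPair (a b : G) : Prop where
  add_self_left : a + a ≠ 0
  add_self_right : b + b ≠ 0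
  add_self_add : (a + b) + (a + b) ≠ 0
  ne : a ≠ b
  left_add_add : a + (a + b) ≠ 0
  right_add_add : b + (a + b) ≠ 0

/-- The differences along the edges of `torusTriangles a b`, one from each pair `±a`, `±b`,
`±(a + b)`. -/
def edgeDifferences (a b : G) : Set G := {a, b, a + b}

theorem edgeDifferences_comm (a b : G) : edgeDifferences a b = edgeDifferences b a := by
  rw [edgeDifferences, edgeDifferences, Set.insert_comm, add_comm a b]

namespace IsTorusPair

theorem symm (h : IsTorusPair a b) : IsTorusPair b a where
  add_self_left := h.add_self_right
  add_self_right := h.add_self_left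
  add_self_add := by simpa only [add_comm b a] using h.add_self_add
  ne := h.ne.symm
  left_add_add := by simpa only [add_comm b a] using h.right_add_add
  right_add_add := by simpa only [add_comm b a] using h.left_add_add

theorem rotate (h : IsTorusPair a b) : IsTorusPair b (-(a + b)) := by
  obtain ⟨_, _, _, _, _, _⟩ := h
  constructor <;> grind

theorem left_ne_zero (h : IsTorusPair a b) : a ≠ 0 := by
  rintro rfl
  exact h.add_self_left (add_zero 0)

theorem right_ne_zero (h : IsTorusPair a b) : b ≠ 0 :=
  h.symm.left_ne_zero

theorem add_ne_zero (h : IsTorusPair a b) : a + b ≠ 0 := fun h_zero ↦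
  h.add_self_add (by rw [h_zero, add_zero])

theorem ne_zero_of_mem_edgeDifferences (h : IsTorusPair a b) {d : G}
    (hd : d ∈ edgeDifferences a b) : d ≠ 0 := by
  rcases hd with rfl | rfl | rfl
  exacts [h.left_ne_zero, h.right_ne_zero, h.add_ne_zero]

theorem add_ne_zero_of_mem_edgeDifferences (h : IsTorusPair a b) {d d' : G}
    (hd : d ∈ edgeDifferences a b) (hd' : d' ∈ edgeDifferences a b) : d + d' ≠ 0 := by
  have h_add := h.add_ne_zero
  obtain ⟨_, _, _, _, _, _⟩ := h
  rcases hd with rfl | rfl | rfl <;> rcases hd' with rfl | rfl | rfl <;> grind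

theorem ncard_edgeDifferences (h : IsTorusPair a b) : (edgeDifferences a b).ncard = 3 :=
  Set.ncard_eq_three.2 ⟨a, b, a + b, h.ne, by simpa using h.right_ne_zero,
    by simpa using h.left_ne_zero, rfl⟩

end IsTorusPair

end TorusPair

section DifferenceTriangle

variable {G : Type*} [AddCommGroup G] [DecidableEq G] {a b : G}

/-- The translate by `i` of the triangle `{0, a, a + b}`: the member with index `i` of the
difference cycle `(a : b : -(a + b))`. -/
def differenceTriangle (a b i : G) : Finset G := {i, i + a, i + a + b}

/-- The triangles of the complex on `G` with differences `a`, `b`, `-(a + b)`: the difference cycles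
of the two cyclic orders of these differences. -/
def torusTriangles (a b : G) : Set (Finset G) :=
  Set.range (differenceTriangle a b) ∪ Set.range (differenceTriangle b a)

theorem torusTriangles_comm (a b : G) : torusTriangles a b = torusTriangles b a :=
  Set.union_comm _ _

theorem differenceTriangle_rotate {c : G} (h : a + b + c = 0) (i : G) :
    differenceTriangle a b i = differenceTriangle b c (i + a) := by
  have h_close : i + a + b + c = i := by rw [add_assoc i, add_assoc i, h, add_zero]
  unfold differenceTriangle
  rw [h_close]
  ext x
  simp only [Finset.mem_insert, Finset.mem_singleton]
  tauto

theorem range_differenceTriangle_rotate {c : G} (h : a + b + c = 0) :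
    Set.range (differenceTriangle a b) = Set.range (differenceTriangle b c) := by
  rw [funext (differenceTriangle_rotate h)]
  exact (Equiv.addRight a).surjective.range_comp (differenceTriangle b c)

theorem exists_eq_differencePair_of_subset_differenceTriangle {i : G} {e : Finset G}
    (he : e.card = 2) (hs : e ⊆ differenceTriangle a b i) :
    ∃ d ∈ edgeDifferences a b, ∃ x, e = differencePair d x := by
  rcases eq_pair_of_card_eq_two_of_subset he hs with rfl | rfl | rfl
  · exact ⟨a, by simp [edgeDifferences], i, rfl⟩
  · exact ⟨b, by simp [edgeDifferences], i + a, rfl⟩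
  · exact ⟨a + b, by simp [edgeDifferences], i, by rw [differencePair, add_assoc]⟩

theorem differencePair_left_subset_differenceTriangle (a b x : G) :
    differencePair a x ⊆ differenceTriangle a b x := by
  simp [differencePair_subset_iff, differenceTriangle]

namespace IsTorusPair

theorem differencePair_left_subset_iff (h : IsTorusPair a b) {x i : G} :
    differencePair a x ⊆ differenceTriangle a b i ↔ i = x := by
  refine ⟨fun h_sub ↦ ?_, ?_⟩
  · simp only [differencePair_subset_iff, differenceTriangle, Finset.mem_insert,
      Finset.mem_singleton] at h_sub
    obtain ⟨rfl | rfl | rfl, h_mem⟩ := h_sub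
    · rfl
    · have : i + a + a ≠ i ∧ i + a + a ≠ i + a ∧ i + a + a ≠ i + a + b := by
        grind [h.add_self_left, h.left_ne_zero, h.ne]
      tauto
    · have : i + a + b + a ≠ i ∧ i + a + b + a ≠ i + a ∧ i + a + b + a ≠ i + a + b := by
        grind [h.left_add_add, h.add_ne_zero, h.left_ne_zero]
      tauto
  · rintro rfl
    exact differencePair_left_subset_differenceTriangle a b i

theorem differencePair_right_subset_iff (h : IsTorusPair a b) {x i : G} :
    differencePair b x ⊆ differenceTriangle a b i ↔ i = x - a := by
  rw [differenceTriangle_rotate (add_neg_cancel (a + b)), h.rotate.differencePair_left_subset_iff,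
    eq_sub_iff_add_eq]

theorem differencePair_add_subset_iff (h : IsTorusPair a b) {x i : G} :
    differencePair (a + b) x ⊆ differenceTriangle a b i ↔ i = x := by
  rw [differenceTriangle_rotate (add_neg_cancel (a + b)), ← differencePair_neg,
    h.rotate.differencePair_right_subset_iff, add_sub_assoc, add_sub_cancel_right, add_left_inj]

theorem differenceTriangle_injective (h : IsTorusPair a b) :
    Function.Injective (differenceTriangle a b) := fun i i' h_eq ↦ by
  have h_sub := differencePair_left_subset_differenceTriangle a b i
  rw [h_eq, h.differencePair_left_subset_iff] at h_sub
  exact h_sub.symm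

theorem differenceTriangle_ne_swap (h : IsTorusPair a b) (i i' : G) :
    differenceTriangle a b i ≠ differenceTriangle b a i' := fun h_eq ↦ by
  have h_left : i' = i - b := by
    rw [← h.symm.differencePair_right_subset_iff, ← h_eq, h.differencePair_left_subset_iff]
  have h_add : i' = i := by
    rw [← h.symm.differencePair_add_subset_iff, ← h_eq, add_comm b a,
      h.differencePair_add_subset_iff]
  exact h.right_ne_zero (sub_eq_self.1 (h_left.symm.trans h_add))

theorem ncard_torusTriangles [Finite G] (h : IsTorusPair a b) :
    (torusTriangles a b).ncard = 2 * Nat.card G := by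
  have h_disjoint : Disjoint (Set.range (differenceTriangle a b))
      (Set.range (differenceTriangle b a)) := by
    rw [Set.disjoint_range_iff]
    exact h.differenceTriangle_ne_swap
  rw [torusTriangles, Set.ncard_union_eq h_disjoint,
    Set.ncard_range_of_injective h.differenceTriangle_injective,
    Set.ncard_range_of_injective h.symm.differenceTriangle_injective, two_mul]

theorem existsUnique_differencePair_subset_differenceTriangle (h : IsTorusPair a b) {d : G}
    (hd : d ∈ edgeDifferences a b) (x : G) :
    ∃! i, differencePair d x ⊆ differenceTriangle a b i := by
  rcases hd with rfl | rfl | rfl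
  · simp only [h.differencePair_left_subset_iff, existsUnique_eq]
  · simp only [h.differencePair_right_subset_iff, existsUnique_eq]
  · simp only [h.differencePair_add_subset_iff, existsUnique_eq]

theorem edges_torusTriangles (h : IsTorusPair a b) :
    edges (torusTriangles a b) =
      (fun p : G × G ↦ differencePair p.1 p.2) '' (edgeDifferences a b ×ˢ Set.univ) := by
  ext e
  constructor
  · rintro ⟨he, s, ⟨i, rfl⟩ | ⟨i, rfl⟩, hs⟩
    · obtain ⟨d, hd, x, rfl⟩ := exists_eq_differencePair_of_subset_differenceTriangle he hs
      exact ⟨(d, x), ⟨hd, trivial⟩, rfl⟩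
    · obtain ⟨d, hd, x, rfl⟩ := exists_eq_differencePair_of_subset_differenceTriangle he hs
      exact ⟨(d, x), ⟨edgeDifferences_comm b a ▸ hd, trivial⟩, rfl⟩
  · rintro ⟨⟨d, x⟩, ⟨hd, -⟩, rfl⟩
    obtain ⟨i, hi, -⟩ := h.existsUnique_differencePair_subset_differenceTriangle hd x
    exact ⟨card_differencePair (h.ne_zero_of_mem_edgeDifferences hd) x, _, Or.inl ⟨i, rfl⟩, hi⟩

theorem ncard_edges_torusTriangles (h : IsTorusPair a b) :
    (edges (torusTriangles a b)).ncard = 3 * Nat.card G := by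
  have h_injOn := differencePair_injOn fun _ hd _ hd' ↦
    h.add_ne_zero_of_mem_edgeDifferences hd hd'
  rw [h.edges_torusTriangles, h_injOn.ncard_image, Set.ncard_prod, h.ncard_edgeDifferences,
    Set.ncard_univ]

theorem existsUnique_subset_differenceTriangle (h : IsTorusPair a b) {e : Finset G}
    (he : e ∈ edges (torusTriangles a b)) : ∃! i, e ⊆ differenceTriangle a b i := by
  rw [h.edges_torusTriangles] at he
  obtain ⟨⟨d, x⟩, ⟨hd, -⟩, rfl⟩ := he
  exact h.existsUnique_differencePair_subset_differenceTriangle hd x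

theorem ncard_torusTriangles_superset (h : IsTorusPair a b) {e : Finset G}
    (he : e ∈ edges (torusTriangles a b)) : {s ∈ torusTriangles a b | e ⊆ s}.ncard = 2 := by
  obtain ⟨u, hu, hu_unique⟩ := h.existsUnique_subset_differenceTriangle he
  obtain ⟨v, hv, hv_unique⟩ :=
    h.symm.existsUnique_subset_differenceTriangle (torusTriangles_comm a b ▸ he)
  have h_pair : {s ∈ torusTriangles a b | e ⊆ s} =
      {differenceTriangle a b u, differenceTriangle b a v} := by
    ext s
    constructor
    · rintro ⟨⟨i, rfl⟩ | ⟨i, rfl⟩, hs⟩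
      · exact Or.inl (congrArg _ (hu_unique i hs))
      · exact Or.inr (congrArg _ (hv_unique i hs))
    · rintro (rfl | rfl)
      exacts [⟨Or.inl ⟨u, rfl⟩, hu⟩, ⟨Or.inr ⟨v, rfl⟩, hv⟩]
  rw [h_pair, Set.ncard_pair (h.differenceTriangle_ne_swap u v)]

end IsTorusPair

theorem stmt_6_general [Finite G] (h : IsTorusPair a b) :
    (∀ e ∈ edges (torusTriangles a b), {s ∈ torusTriangles a b | e ⊆ s}.ncard = 2) ∧
    (torusTriangles a b).ncard = 2 * Nat.card G ∧
    (edges (torusTriangles a b)).ncard = 3 * Nat.card G ∧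
    (Nat.card G : ℤ) - (edges (torusTriangles a b)).ncard + (torusTriangles a b).ncard = 0 := by
  refine ⟨fun _ he ↦ h.ncard_torusTriangles_superset he, h.ncard_torusTriangles,
    h.ncard_edges_torusTriangles, ?_⟩
  rw [h.ncard_edges_torusTriangles, h.ncard_torusTriangles]
  push_cast
  ring

end DifferenceTriangle

section ZMod

theorem natCast_zmod_ne_zero_of_lt_two_mul {n m : ℕ} (h_pos : m ≠ 0) (h_lt : m < 2 * n)
    (h_ne : m ≠ n) : (m : ZMod n) ≠ 0 := fun h_zero ↦
  h_ne (Nat.eq_of_dvd_of_lt_two_mul h_pos ((ZMod.natCast_eq_zero_iff m n).1 h_zero) h_lt)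

theorem isTorusPair_natCast {n l j : ℕ} (hl : l ≠ 0) (hj : j ≠ 0) (h_lt : l + j < n)
    (h_ne : l ≠ j) (h_left : l + (l + j) ≠ n) (h_right : j + (l + j) ≠ n)
    (hl_half : l + l ≠ n) (hj_half : j + j ≠ n) (h_add_half : (l + j) + (l + j) ≠ n) :
    IsTorusPair (l : ZMod n) (j : ZMod n) where
  add_self_left := mod_cast natCast_zmod_ne_zero_of_lt_two_mul (by lia) (by lia) hl_half
  add_self_right := mod_cast natCast_zmod_ne_zero_of_lt_two_mul (by lia) (by lia) hj_half
  add_self_add := mod_cast natCast_zmod_ne_zero_of_lt_two_mul (by lia) (by lia) h_add_half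
  ne h_eq := by
    rw [ZMod.natCast_eq_natCast_iff', Nat.mod_eq_of_lt (by lia), Nat.mod_eq_of_lt (by lia)] at h_eq
    exact h_ne h_eq
  left_add_add := mod_cast natCast_zmod_ne_zero_of_lt_two_mul (by lia) (by lia) h_left
  right_add_add := mod_cast natCast_zmod_ne_zero_of_lt_two_mul (by lia) (by lia) h_right

theorem dc_eq_range_differenceTriangle (n a b : ℕ) :
    dc n a b = Set.range (differenceTriangle (a : ZMod n) b) :=
  Set.ext fun _ ↦ exists_congr fun _ ↦ eq_comm

theorem dc_rotate {n a b c : ℕ} (h : a + b + c = n) : dc n a b = dc n b c := by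
  have h_cast : (a + b + c : ZMod n) = 0 := by
    rw [← ZMod.natCast_self n, ← h]
    push_cast
    rfl
  simp only [dc_eq_range_differenceTriangle, range_differenceTriangle_rotate h_cast]

theorem Sljn_eq_torusTriangles {k l j : ℕ} (h : l + j ≤ 2 * k) :
    Sljn k l j = torusTriangles (l : ZMod (2 * k)) (j : ZMod (2 * k)) := by
  have h_rotate : dc (2 * k) j l = dc (2 * k) l (2 * k - l - j) := dc_rotate (by lia)
  rw [Sljn, ← h_rotate, dc_eq_range_differenceTriangle, dc_eq_range_differenceTriangle,
    torusTriangles]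

end ZMod

/-- For `0 < l < j < 2k−l−j` with `k ∉ {l, j, l+j}`: every edge of `S_{l,j,2k}` is in
exactly two triangles; `S_{l,j,2k}` has `4k` triangles and `6k` edges, hence Euler
characteristic `2k − 6k + 4k = 0`. -/
theorem stmt_6 (k l j : ℕ) (hk : 3 ≤ k)
    (hl : 0 < l) (hlj : l < j) (hj : l + 2 * j < 2 * k)
    (h1 : k ≠ l) (h2 : k ≠ j) (h3 : k ≠ l + j) :
    (∀ e : Finset (ZMod (2 * k)), e.card = 2 → (∃ s ∈ Sljn k l j, e ⊆ s) →
      {s ∈ Sljn k l j | e ⊆ s}.ncard = 2) ∧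
    (Sljn k l j).ncard = 4 * k ∧
    {e : Finset (ZMod (2 * k)) | e.card = 2 ∧ ∃ s ∈ Sljn k l j, e ⊆ s}.ncard = 6 * k ∧
    (2 * k : ℤ) - (6 * k : ℤ) + (4 * k : ℤ) = 0 := by
  have : NeZero (2 * k) := ⟨by lia⟩
  have h_pair : IsTorusPair (l : ZMod (2 * k)) (j : ZMod (2 * k)) := by
    apply isTorusPair_natCast <;> lia
  obtain ⟨h_two, h_triangles, h_edges, h_euler⟩ := stmt_6_general h_pair
  rw [h_triangles, h_edges, Nat.card_zmod] at h_euler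
  rw [Nat.card_zmod, ← mul_assoc] at h_triangles h_edges
  rw [Sljn_eq_torusTriangles (by lia)]
  exact ⟨fun e he hs ↦ h_two e ⟨he, hs⟩, h_triangles, h_edges, by push_cast at h_euler; linarith⟩
end

section
/- Let k ≥ 3 and let l, j be integers with 0 < l < j < 2k − l − j and k ∉ {l, j, l + j}. Then every 2-element subset of ℤ/2kℤ contained in some member of S_{l,j,2k} is contained in exactly one member of the difference cycle (l : j : 2k−l−j) and in exactly one member of the difference cycle (l : 2k−l−j : j); in particular the two difference cycles have the same set of edges. -/
/-!
Call a set `D` in an abelian group Sidon if a sum of two of its elements determines the summands,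
equivalently if nonzero differences of elements of `D` determine the minuend and the subtrahend.
Two distinct points `x` and `y` then lie in at most one translate of `D`, because `x - y`
determines their positions in the translate. Moreover, the point reflection `z ↦ x + y - z`
exchanges `x` and `y` and carries translates of `D` to translates of `-D`, so a pair of points
lies in a translate of `D` exactly when it lies in a translate of `-D`. If `l + j + m = n`, the
difference cycles `(l : j : m)` and `(l : m : j)` consist of the translates of `{0, l, l + j}` and
of its negative, and this triple is Sidon when the six residues `±l`, `±j`, `±m` are distinct.
-/

section Sidon

open scoped Pointwise
open AddAction

variable {G : Type*} [AddCommGroup G]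

/-- A Sidon set of an abelian group: a sum of two of its elements determines the two summands up
to order. The two summands may coincide. -/
def IsSidon (D : Set G) : Prop :=
  ∀ ⦃a⦄, a ∈ D → ∀ ⦃b⦄, b ∈ D → ∀ ⦃c⦄, c ∈ D → ∀ ⦃d⦄, d ∈ D →
    a + b = c + d → a = c ∧ b = d ∨ a = d ∧ b = c

theorem IsSidon.neg {D : Set G} (hD : IsSidon D) : IsSidon (-D) := by
  intro a ha b hb c hc d hd h
  have h_neg : -a + -b = -c + -d := by rw [← neg_add, h, neg_add]
  simpa only [neg_inj] using hD ha hb hc hd h_neg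

theorem IsSidon.eq_of_mem_vadd {D : Set G} (hD : IsSidon D) {x y i i' : G} (hxy : x ≠ y)
    (hx : x ∈ i +ᵥ D) (hy : y ∈ i +ᵥ D) (hx' : x ∈ i' +ᵥ D) (hy' : y ∈ i' +ᵥ D) : i = i' := by
  rw [Set.mem_vadd_set_iff_neg_vadd_mem, vadd_eq_add] at hx hy hx' hy'
  have h_sum : (-i + x) + (-i' + y) = (-i' + x) + (-i + y) := by abel
  rcases hD hx hy' hx' hy h_sum with ⟨h, -⟩ | ⟨h, -⟩
  · exact neg_injective (add_right_cancel h)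
  · exact absurd (add_left_cancel h) hxy

variable [DecidableEq G] {D e : Finset G}

theorem IsSidon.ncard_orbit_superset_eq_one (hD : IsSidon (D : Set G)) (he : e.card = 2)
    (h : ∃ s ∈ orbit G D, e ⊆ s) : {s ∈ orbit G D | e ⊆ s}.ncard = 1 := by
  obtain ⟨x, y, hxy, rfl⟩ := Finset.card_eq_two.1 he
  obtain ⟨s, hs⟩ := h
  refine Set.ncard_eq_one.2 ⟨s, Set.eq_singleton_iff_unique_mem.2 ⟨hs, ?_⟩⟩
  obtain ⟨⟨i, rfl⟩, hi⟩ := hs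
  rintro _ ⟨⟨i', rfl⟩, hi'⟩
  simp only [Finset.insert_subset_iff, Finset.singleton_subset_iff, ← Finset.mem_coe,
    Finset.coe_vadd_finset] at hi hi'
  rw [hD.eq_of_mem_vadd hxy hi.1 hi.2 hi'.1 hi'.2]

theorem add_sub_mem_vadd_neg {x y z i : G} (hz : z ∈ i +ᵥ D) :
    x + y - z ∈ (x + y - i) +ᵥ -D := by
  obtain ⟨d, hd, rfl⟩ := Finset.mem_vadd_finset.1 hz
  refine Finset.mem_vadd_finset.2 ⟨-d, Finset.neg_mem_neg hd, ?_⟩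
  simp only [vadd_eq_add]
  abel

theorem exists_mem_orbit_neg_superset (he : e.card = 2) (h : ∃ s ∈ orbit G D, e ⊆ s) :
    ∃ s ∈ orbit G (-D), e ⊆ s := by
  obtain ⟨x, y, -, rfl⟩ := Finset.card_eq_two.1 he
  obtain ⟨_, ⟨i, rfl⟩, hi⟩ := h
  simp only [Finset.insert_subset_iff, Finset.singleton_subset_iff] at hi
  refine ⟨(x + y - i) +ᵥ -D, mem_orbit _ _, ?_⟩
  simp only [Finset.insert_subset_iff, Finset.singleton_subset_iff]
  constructor
  · simpa only [add_sub_cancel_right] using add_sub_mem_vadd_neg (x := x) (y := y) hi.2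
  · simpa only [add_sub_cancel_left] using add_sub_mem_vadd_neg (x := x) (y := y) hi.1

theorem exists_mem_orbit_neg_superset_iff (he : e.card = 2) :
    (∃ s ∈ orbit G (-D), e ⊆ s) ↔ ∃ s ∈ orbit G D, e ⊆ s :=
  ⟨fun h => neg_neg D ▸ exists_mem_orbit_neg_superset he h, exists_mem_orbit_neg_superset he⟩

end Sidon

section DifferenceCycle

open scoped Pointwise
open AddAction

variable {G : Type*} [AddCommGroup G] [DecidableEq G]

/-- The triple `{0, a, a + b}`, whose translates in `ℤ/nℤ` form the difference cycle
`(a : b : n - a - b)`. -/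
def baseTriangle (a b : G) : Finset G :=
  {0, a, a + b}

theorem isSidon_baseTriangle {a b : G} (h2a : a + a ≠ 0) (h2b : b + b ≠ 0)
    (h2ab : (a + b) + (a + b) ≠ 0) (hab : a ≠ b) (haab : a + (a + b) ≠ 0)
    (hbab : b + (a + b) ≠ 0) : IsSidon (baseTriangle a b : Set G) := by
  intro x hx y hy z hz w hw h
  simp only [baseTriangle, Finset.coe_insert, Finset.coe_singleton, Set.mem_insert_iff,
    Set.mem_singleton_iff] at hx hy hz hw
  rcases hx with rfl | rfl | rfl <;> rcases hy with rfl | rfl | rfl <;>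
    rcases hz with rfl | rfl | rfl <;> rcases hw with rfl | rfl | rfl <;> grind

theorem baseTriangle_eq_vadd_neg {a b c : G} (h : a + b + c = 0) :
    baseTriangle a c = a +ᵥ -baseTriangle a b := by
  rw [eq_neg_of_add_eq_zero_right h]
  have h_last : a + -(a + b) = -b := by abel
  simp only [baseTriangle, Finset.neg_insert, Finset.neg_singleton, Finset.vadd_finset_insert,
    Finset.vadd_finset_singleton, vadd_eq_add, neg_zero, add_zero, add_neg_cancel, h_last,
    Finset.insert_comm]

theorem dc_eq_orbit (n a b : ℕ) :
    dc n a b = orbit (ZMod n) (baseTriangle (a : ZMod n) (b : ZMod n)) := by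
  have h_translate (i : ZMod n) : i +ᵥ baseTriangle (a : ZMod n) b = {i, i + a, i + a + b} := by
    simp only [baseTriangle, Finset.vadd_finset_insert, Finset.vadd_finset_singleton, vadd_eq_add,
      add_zero, add_assoc]
  ext s
  simp only [mem_orbit_iff, h_translate]
  exact exists_congr fun _ => eq_comm

theorem dc_eq_orbit_neg {n a b c : ℕ} (h : a + b + c = n) :
    dc n a c = orbit (ZMod n) (-baseTriangle (a : ZMod n) (b : ZMod n)) := by
  have h_sum : (a + b + c : ZMod n) = 0 := by
    rw [← ZMod.natCast_self n, ← h]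
    push_cast
    rfl
  rw [dc_eq_orbit, baseTriangle_eq_vadd_neg h_sum, orbit_vadd]

theorem natCast_zmod_ne_zero {n m : ℕ} (h_pos : 0 < m) (h_lt : m < 2 * n) (h_ne : m ≠ n) :
    (m : ZMod n) ≠ 0 := fun h =>
  h_ne (Nat.eq_of_dvd_of_lt_two_mul h_pos.ne' ((ZMod.natCast_eq_zero_iff m n).1 h) h_lt)

theorem isSidon_baseTriangle_natCast {n a b c : ℕ} (hn : a + b + c = n) (ha : 0 < a) (hb : 0 < b)
    (hc : 0 < c) (hab : a ≠ b) (hbc : b ≠ c) (hac : a ≠ c) (h2a : n ≠ 2 * a) (h2b : n ≠ 2 * b)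
    (h2c : n ≠ 2 * c) : IsSidon (baseTriangle (a : ZMod n) (b : ZMod n) : Set (ZMod n)) := by
  have h_ne : (a : ZMod n) ≠ b := fun h =>
    hab (((ZMod.natCast_eq_natCast_iff a b n).1 h).eq_of_lt_of_lt (by lia) (by lia))
  apply isSidon_baseTriangle (hab := h_ne) <;> norm_cast <;>
    exact natCast_zmod_ne_zero (by lia) (by lia) (by lia)

theorem stmt_7_general {n l j m : ℕ} (hn : l + j + m = n) (hl : 0 < l) (hj : 0 < j) (hm : 0 < m)
    (hlj : l ≠ j) (hjm : j ≠ m) (hlm : l ≠ m) (h2l : n ≠ 2 * l) (h2j : n ≠ 2 * j)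
    (h2m : n ≠ 2 * m) :
    (∀ e : Finset (ZMod n), e.card = 2 → (∃ s ∈ dc n l j ∪ dc n l m, e ⊆ s) →
      {s ∈ dc n l j | e ⊆ s}.ncard = 1 ∧ {s ∈ dc n l m | e ⊆ s}.ncard = 1) ∧
    {e : Finset (ZMod n) | e.card = 2 ∧ ∃ s ∈ dc n l j, e ⊆ s} =
      {e : Finset (ZMod n) | e.card = 2 ∧ ∃ s ∈ dc n l m, e ⊆ s} := by
  have hD := isSidon_baseTriangle_natCast hn hl hj hm hlj hjm hlm h2l h2j h2m
  have hD_neg : IsSidon ((-baseTriangle (l : ZMod n) j : Finset (ZMod n)) : Set (ZMod n)) := by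
    simpa only [Finset.coe_neg] using hD.neg
  have h_edges {e : Finset (ZMod n)} (he : e.card = 2) :
      (∃ s ∈ dc n l m, e ⊆ s) ↔ ∃ s ∈ dc n l j, e ⊆ s := by
    rw [dc_eq_orbit_neg hn, dc_eq_orbit]
    exact exists_mem_orbit_neg_superset_iff he
  refine ⟨fun e he ⟨s, hs, hes⟩ => ?_, Set.ext fun e => and_congr_right fun he =>
    (h_edges he).symm⟩
  have h_left : ∃ s ∈ dc n l j, e ⊆ s :=
    hs.elim (fun hs => ⟨s, hs, hes⟩) fun hs => (h_edges he).1 ⟨s, hs, hes⟩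
  have h_right : ∃ s ∈ dc n l m, e ⊆ s := (h_edges he).2 h_left
  rw [dc_eq_orbit] at h_left ⊢
  rw [dc_eq_orbit_neg hn] at h_right ⊢
  exact ⟨hD.ncard_orbit_superset_eq_one he h_left, hD_neg.ncard_orbit_superset_eq_one he h_right⟩

end DifferenceCycle

/-- For `0 < l < j < 2k−l−j` with `k ∉ {l, j, l+j}`: every edge of `S_{l,j,2k}` lies in
exactly one triangle of `(l : j : 2k−l−j)` and exactly one triangle of
`(l : 2k−l−j : j)`; in particular the two difference cycles have the same edges. -/
theorem stmt_7 (k l j : ℕ) (hk : 3 ≤ k)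
    (hl : 0 < l) (hlj : l < j) (hj : l + 2 * j < 2 * k)
    (h1 : k ≠ l) (h2 : k ≠ j) (h3 : k ≠ l + j) :
    (∀ e : Finset (ZMod (2 * k)), e.card = 2 → (∃ s ∈ Sljn k l j, e ⊆ s) →
      {s ∈ dc (2 * k) l j | e ⊆ s}.ncard = 1 ∧
      {s ∈ dc (2 * k) l (2 * k - l - j) | e ⊆ s}.ncard = 1) ∧
    {e : Finset (ZMod (2 * k)) | e.card = 2 ∧ ∃ s ∈ dc (2 * k) l j, e ⊆ s} =
      {e : Finset (ZMod (2 * k)) | e.card = 2 ∧ ∃ s ∈ dc (2 * k) l (2 * k - l - j), e ⊆ s} := by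
  apply stmt_7_general <;> lia
end

section
/- Let k ≥ 3, let l, j be integers with 0 < l < j < 2k − l − j and k ∉ {l, j, l + j}, and set m := gcd(l, j, 2k). Then the simple graph on ℤ/2kℤ whose edges are the 2-element subsets contained in some member of S_{l,j,2k} has exactly m connected components, each with 2k/m vertices, and the vertex shift v ↦ v + 1 maps each connected component isomorphically onto another, so all connected components of S_{l,j,2k} are combinatorially isomorphic. -/
/-- The graph on `ℤ/nℤ` whose edges are the 2-element subsets contained in some
member of `S`. -/
def cGraph (n : ℕ) (S : Set (Finset (ZMod n))) : SimpleGraph (ZMod n) :=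
  SimpleGraph.fromRel (fun v w => ∃ s ∈ S, v ∈ s ∧ w ∈ s)

/-!
Modulo `n = a + b + c` we have `c = -(a + b)` and `a + c = -b`, so the two difference cycles
`(a : b : c)` and `(a : c : b)` have the same edges, and the graph is the Cayley graph of `ℤ/nℤ` on
the generators `a`, `b`, `a + b`. The components of a Cayley graph are the cosets of the subgroup
spanned by the generators, here the multiples of `gcd(a, b)`; this subgroup has index
`gcd(a, b, n)`. Translations are symmetries and act transitively on the cosets.
-/

section Cayley

open SimpleGraph AddSubgroup

variable {G : Type*} [AddGroup G] {s : Set G} {u v : G}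

lemma addCayley_reachable_add {g : G} (hg : g ∈ closure s) (u : G) :
    (addCayley s).Reachable u (u + g) := by
  induction hg using closure_induction generalizing u with
  | mem g hg =>
    by_cases hu : u = u + g
    · rw [← hu]
    · exact Adj.reachable ((addCayley_adj' s _ _).2 ⟨hu, g, hg, .inl rfl⟩)
  | zero => rw [add_zero]
  | add g h _ _ ihg ihh => exact add_assoc u g h ▸ (ihg u).trans (ihh (u + g))
  | neg g _ ih => simpa only [neg_add_cancel_right] using (ih (u + -g)).symm

lemma neg_add_mem_closure_of_addCayley_adj (h : (addCayley s).Adj u v) : -u + v ∈ closure s := by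
  rcases ((addCayley_adj s u v).1 h).2 with h | h
  · exact subset_closure h
  · simpa only [neg_add_rev, neg_neg] using neg_mem (subset_closure h)

theorem addCayley_reachable_iff : (addCayley s).Reachable u v ↔ -u + v ∈ closure s := by
  refine ⟨?_, fun h => add_neg_cancel_left u v ▸ addCayley_reachable_add h u⟩
  rintro ⟨p⟩
  induction p with
  | nil => simp only [neg_add_cancel, zero_mem]
  | @cons u v w huv _ ih =>
    have : -u + w = (-u + v) + (-v + w) := by rw [add_assoc, add_neg_cancel_left]
    exact this ▸ add_mem (neg_add_mem_closure_of_addCayley_adj huv) ih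

lemma card_connectedComponent_addCayley (s : Set G) :
    Nat.card (addCayley s).ConnectedComponent = (closure s).index :=
  Nat.card_congr <| Quot.congrRight fun _ _ =>
    addCayley_reachable_iff.trans QuotientAddGroup.leftRel_apply.symm

lemma card_supp_addCayley (c : (addCayley s).ConnectedComponent) :
    Nat.card c.supp = Nat.card (closure s) := by
  induction c using ConnectedComponent.ind with | _ u
  refine Nat.card_congr ((Equiv.addLeft (-u)).subtypeEquiv fun v => ?_)
  rw [ConnectedComponent.mem_supp_iff, ConnectedComponent.eq, reachable_comm,
    addCayley_reachable_iff, Equiv.coe_addLeft]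

/-- Left translation by `d` as an automorphism of a Cayley graph, whose generators act on the
right. -/
def addCayleyTranslate (s : Set G) (d : G) : addCayley s ≃g addCayley s where
  toEquiv := Equiv.addLeft d
  map_rel_iff' := addCayley_adj_add_iff_right

lemma exists_addCayleyTranslate_connectedComponentMk (c c' : (addCayley s).ConnectedComponent) :
    ∃ d, ∀ v, (addCayley s).connectedComponentMk v = c →
      (addCayley s).connectedComponentMk (addCayleyTranslate s d v) = c' := by
  induction c using ConnectedComponent.ind with | _ a
  induction c' using ConnectedComponent.ind with | _ b
  obtain ⟨d, rfl⟩ : ∃ d, addCayleyTranslate s d a = b := ⟨b + -a, neg_add_cancel_right b a⟩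
  exact ⟨d, fun v hv =>
    ConnectedComponent.sound (Iso.reachable_iff.2 (ConnectedComponent.exact hv))⟩

lemma closure_insert_pair_add (g h : G) : closure {g, h, g + h} = closure {g, h} := by
  refine le_antisymm ((closure_le _).2 ?_) (closure_mono (by grind))
  have hg : g ∈ closure {g, h} := subset_closure (by simp)
  have hh : h ∈ closure {g, h} := subset_closure (by simp)
  rintro _ (rfl | rfl | rfl)
  exacts [hg, hh, add_mem hg hh]

end Cayley

section ZMod

lemma closure_natCast_pair_eq_map_zmultiples (n a b : ℕ) :
    AddSubgroup.closure {(a : ZMod n), (b : ZMod n)} =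
      (AddSubgroup.zmultiples (a.gcd b : ℤ)).map (Int.castAddHom (ZMod n)) := by
  rw [← Int.gcd_natCast_natCast, ← Int.closure_eq_zmultiples, AddMonoidHom.map_closure,
    Set.image_pair]
  simp only [Int.coe_castAddHom, Int.cast_natCast]

lemma index_closure_natCast_pair (n a b : ℕ) :
    (AddSubgroup.closure {(a : ZMod n), (b : ZMod n)}).index = a.gcd (b.gcd n) := by
  have hsurj : Function.Surjective (Int.castAddHom (ZMod n)) := ZMod.intCast_surjective
  rw [closure_natCast_pair_eq_map_zmultiples, AddSubgroup.index_map, ZMod.ker_intCastAddHom,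
    Int.zmultiples_sup, Int.index_zmultiples, AddMonoidHom.range_eq_top.2 hsurj,
    AddSubgroup.index_top, mul_one, Int.natAbs_natCast, Int.gcd_natCast_natCast, Nat.gcd_assoc]

lemma card_closure_natCast_pair {n : ℕ} (hn : n ≠ 0) (a b : ℕ) :
    Nat.card (AddSubgroup.closure {(a : ZMod n), (b : ZMod n)}) = n / a.gcd (b.gcd n) := by
  have hgcd : a.gcd (b.gcd n) ≠ 0 := by simp [Nat.gcd_eq_zero_iff, hn]
  rw [← index_closure_natCast_pair] at hgcd ⊢
  exact Nat.eq_div_of_mul_eq_left hgcd ((AddSubgroup.card_mul_index _).trans (Nat.card_zmod n))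

end ZMod

section DifferenceCycle

open SimpleGraph

variable {n : ℕ}

lemma image_addLeft_mem_dc_iff {a b : ℕ} {d : ZMod n} {s : Finset (ZMod n)} :
    s.image (Equiv.addLeft d) ∈ dc n a b ↔ s ∈ dc n a b := by
  have himage (i : ZMod n) : ({d + i, d + i + a, d + i + a + b} : Finset (ZMod n)) =
      ({i, i + a, i + a + b} : Finset (ZMod n)).image (Equiv.addLeft d) := by
    simp only [Finset.image_insert, Finset.image_singleton, Equiv.coe_addLeft, add_assoc]
  refine (Equiv.addLeft d).surjective.exists.trans (exists_congr fun i => ?_)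
  rw [← (Finset.image_injective (Equiv.addLeft d).injective).eq_iff (a := s), ← himage,
    Equiv.coe_addLeft]

lemma cGraph_adj {S : Set (Finset (ZMod n))} {v w : ZMod n} :
    (cGraph n S).Adj v w ↔ v ≠ w ∧ ∃ s ∈ S, v ∈ s ∧ w ∈ s := by
  simp only [cGraph, fromRel_adj, and_comm (a := w ∈ _), or_self]

lemma cGraph_union (S T : Set (Finset (ZMod n))) :
    cGraph n (S ∪ T) = cGraph n S ⊔ cGraph n T := by
  ext v w
  simp only [cGraph_adj, sup_adj, Set.mem_union, or_and_right, exists_or, and_or_left]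

lemma cGraph_dc (a b : ℕ) :
    cGraph n (dc n a b) = addCayley {(a : ZMod n), (b : ZMod n), (a + b : ZMod n)} := by
  ext v w
  rw [cGraph_adj, addCayley_adj', and_congr_right_iff]
  intro hvw
  constructor
  · rintro ⟨_, ⟨i, rfl⟩, hv, hw⟩
    simp only [Finset.mem_insert, Finset.mem_singleton] at hv hw
    rcases hv with rfl | rfl | rfl <;> rcases hw with rfl | rfl | rfl <;>
      simp_all [add_assoc]
  · rintro ⟨g, rfl | rfl | rfl, rfl | rfl⟩
    · exact ⟨_, ⟨v, rfl⟩, by simp⟩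
    · exact ⟨_, ⟨w, rfl⟩, by simp⟩
    · exact ⟨_, ⟨v - a, rfl⟩, by simp⟩
    · exact ⟨_, ⟨w - a, rfl⟩, by simp⟩
    · exact ⟨_, ⟨v, rfl⟩, by simp [add_assoc]⟩
    · exact ⟨_, ⟨w, rfl⟩, by simp [add_assoc]⟩

lemma cGraph_dc_swap {a b c : ℕ} (h : a + b + c = n) :
    cGraph n (dc n a c) = cGraph n (dc n a b) := by
  have habc : (a + b + c : ZMod n) = 0 := by rw [← ZMod.natCast_self n, ← h]; push_cast; rfl
  have hc : (c : ZMod n) = -(a + b) := (neg_eq_of_add_eq_zero_right habc).symm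
  have hac : (a + c : ZMod n) = -b := by rw [hc]; ring
  have hneg : ({-(a + b : ZMod n), -(b : ZMod n)} : Set (ZMod n)) =
      -{(b : ZMod n), (a + b : ZMod n)} := by
    rw [Set.neg_insert, Set.neg_singleton, Set.pair_comm]
  rw [cGraph_dc, cGraph_dc, hac, hc, hneg, Set.insert_eq, addCayley_union, addCayley_neg,
    ← addCayley_union, ← Set.insert_eq]

lemma cGraph_dc_union_dc {a b c : ℕ} (h : a + b + c = n) :
    cGraph n (dc n a b ∪ dc n a c) =
      addCayley {(a : ZMod n), (b : ZMod n), (a + b : ZMod n)} := by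
  rw [cGraph_union, cGraph_dc_swap h, sup_idem, cGraph_dc]

end DifferenceCycle

theorem stmt_8_general (n a b c : ℕ) (hn : n ≠ 0) (habc : a + b + c = n) :
    Nat.card (cGraph n (dc n a b ∪ dc n a c)).ConnectedComponent = Nat.gcd a (Nat.gcd b n) ∧
    (∀ C : (cGraph n (dc n a b ∪ dc n a c)).ConnectedComponent,
      Nat.card C.supp = n / Nat.gcd a (Nat.gcd b n)) ∧
    (∃ φ : cGraph n (dc n a b ∪ dc n a c) ≃g cGraph n (dc n a b ∪ dc n a c),
      ∀ v : ZMod n, φ v = v + 1) ∧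
    (∀ C C' : (cGraph n (dc n a b ∪ dc n a c)).ConnectedComponent,
      ∃ φ : ZMod n ≃ ZMod n,
        (∀ s, s ∈ dc n a b ∪ dc n a c ↔ s.image φ ∈ dc n a b ∪ dc n a c) ∧
        (∀ v, (cGraph n (dc n a b ∪ dc n a c)).connectedComponentMk v = C →
          (cGraph n (dc n a b ∪ dc n a c)).connectedComponentMk (φ v) = C')) := by
  rw [cGraph_dc_union_dc habc]
  refine ⟨?_, fun C => ?_, ⟨addCayleyTranslate _ 1, add_comm 1⟩, fun C C' => ?_⟩
  · rw [card_connectedComponent_addCayley, closure_insert_pair_add, index_closure_natCast_pair]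
  · rw [card_supp_addCayley, closure_insert_pair_add, card_closure_natCast_pair hn]
  · obtain ⟨d, hd⟩ := exists_addCayleyTranslate_connectedComponentMk C C'
    exact ⟨Equiv.addLeft d,
      fun s => (or_congr image_addLeft_mem_dc_iff image_addLeft_mem_dc_iff).symm, hd⟩

/-- For `0 < l < j < 2k−l−j`, `k ∉ {l, j, l+j}` and `m = gcd(l, j, 2k)`: `S_{l,j,2k}`
has exactly `m` connected components with `2k/m` vertices each, the vertex shift
`v ↦ v + 1` is an automorphism (so it maps components isomorphically onto others), and
all connected components are combinatorially isomorphic. -/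
theorem stmt_8 (k l j m : ℕ) (hk : 3 ≤ k)
    (hl : 0 < l) (hlj : l < j) (hj : l + 2 * j < 2 * k)
    (h1 : k ≠ l) (h2 : k ≠ j) (h3 : k ≠ l + j)
    (hm : m = Nat.gcd l (Nat.gcd j (2 * k))) :
    Nat.card (cGraph (2 * k) (Sljn k l j)).ConnectedComponent = m ∧
    (∀ c : (cGraph (2 * k) (Sljn k l j)).ConnectedComponent,
      Nat.card {v : ZMod (2 * k) //
        (cGraph (2 * k) (Sljn k l j)).connectedComponentMk v = c} = 2 * k / m) ∧
    (∃ φ : cGraph (2 * k) (Sljn k l j) ≃g cGraph (2 * k) (Sljn k l j),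
      ∀ v : ZMod (2 * k), φ v = v + 1) ∧
    (∀ c c' : (cGraph (2 * k) (Sljn k l j)).ConnectedComponent,
      ∃ φ : ZMod (2 * k) ≃ ZMod (2 * k),
        (∀ s : Finset (ZMod (2 * k)), s ∈ Sljn k l j ↔ s.image φ ∈ Sljn k l j) ∧
        (∀ v : ZMod (2 * k), (cGraph (2 * k) (Sljn k l j)).connectedComponentMk v = c →
          (cGraph (2 * k) (Sljn k l j)).connectedComponentMk (φ v) = c')) := by
  subst hm
  exact stmt_8_general (2 * k) l j (2 * k - l - j) (by lia) (by lia)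
end

section
/- Let k ≥ 3 and let l be an integer with 1 ≤ l ≤ ⌊(k−1)/2⌋ and 3l ≠ k. Then the elements l, 2l, 2k−l, 2k−2l, k−l, k+l of ℤ/2kℤ are pairwise distinct and nonzero and are exactly the vertices v such that {0, v} is contained in some member of S_{l,2k}; every 2-element subset contained in some member of S_{l,2k} is contained in exactly two members of S_{l,2k}; and S_{l,2k} has exactly 4k members (triangles) and exactly 6k such 2-element subsets (edges), so its Euler characteristic 2k − 6k + 4k equals 0. -/
/-- `S_{l,2k}`: the union of the difference cycles `(l : l : 2(k−l))` and
`(k−l : k−l : 2l)` on `ℤ/2kℤ`. -/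
def Sln (k l : ℕ) : Set (Finset (ZMod (2 * k))) :=
  dc (2 * k) l l ∪ dc (2 * k) (k - l) (k - l)

/-!
Put `x = l` and `y = k - l`. Both families consist of triangles `{i, i + d, i + 2d}`, with `d = x`
or `d = y`, and `2x = -2y` because `2x + 2y = 2k = 0`. An edge of difference `x` lies only in the
triangles of step `x` starting at its ends `i` and `i - x`, and likewise for `y`; the long edges of
both families are the same `2k` pairs of difference `2x`, so along each of them one triangle of
either family is glued. Hence the edges form three classes, of differences `x`, `y` and `2x`, and
the neighbours of `0` are `±x`, `±y` and `±2x`. All degeneracies are excluded by the conditions in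
`IsHexagonalPair`; of these, `3y ≠ 0` is the one that needs `3l ≠ k`.
-/

open Finset

/-- The edges of the pure complex with facets `S`: the pairs contained in some member of `S`. -/
def edgesOf {α : Type*} (S : Set (Finset α)) : Set (Finset α) :=
  {e | e.card = 2 ∧ ∃ s ∈ S, e ⊆ s}

section Edges

variable {α : Type*}

theorem edgesOf_union (S T : Set (Finset α)) : edgesOf (S ∪ T) = edgesOf S ∪ edgesOf T := by
  ext e
  simp only [edgesOf, Set.mem_ofPred_eq, Set.mem_union, or_and_right, exists_or, and_or_left]

variable [DecidableEq α]

theorem pair_mem_edgesOf_iff {S : Set (Finset α)} {u v : α} :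
    {u, v} ∈ edgesOf S ↔ u ≠ v ∧ ∃ s ∈ S, u ∈ s ∧ v ∈ s := by
  simp only [edgesOf, Set.mem_ofPred_eq, card_pair_eq_two_iff, insert_subset_iff,
    singleton_subset_iff]

theorem card_eq_two_and_subset_triple_iff {a b c : α} (hab : a ≠ b) (hbc : b ≠ c) (hac : a ≠ c)
    {e : Finset α} :
    e.card = 2 ∧ e ⊆ {a, b, c} ↔ e = {a, b} ∨ e = {b, c} ∨ e = {a, c} := by
  constructor
  · rintro ⟨he, hsub⟩
    obtain ⟨u, v, huv, rfl⟩ := card_eq_two.mp he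
    simp only [insert_subset_iff, singleton_subset_iff, mem_insert, mem_singleton] at hsub
    grind [pair_comm]
  · rintro (rfl | rfl | rfl) <;> simp [insert_subset_iff, *]

end Edges

section Progressions

variable {G : Type*} [AddCommGroup G] [DecidableEq G]

/-- The pair of difference `d` starting at `i`, a two-term arithmetic progression. -/
def apEdge (d i : G) : Finset G := {i, i + d}

/-- The three-term arithmetic progression of step `d` starting at `i`, a member of the difference
cycle `(d : d : -2d)`. The last term is written `i + d + d` to match `dc`. -/
def apTriangle (d i : G) : Finset G := {i, i + d, i + d + d}

theorem apEdge_neg (d i : G) : apEdge (-d) i = apEdge d (i - d) := by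
  simp only [apEdge, ← sub_eq_add_neg, sub_add_cancel, pair_comm]

theorem range_apEdge_neg (d : G) : Set.range (apEdge (-d)) = Set.range (apEdge d) := by
  rw [funext (apEdge_neg d)]
  exact (Equiv.subRight d).surjective.range_comp (apEdge d)

theorem apEdge_eq_apEdge_iff {d e i j : G} :
    apEdge d i = apEdge e j ↔ d = e ∧ i = j ∨ d = -e ∧ i = j + e := by
  rw [apEdge, apEdge, ← coe_inj, coe_pair, coe_pair, Set.pair_eq_pair_iff]
  grind

theorem zero_pair_mem_range_apEdge_iff {d v : G} :
    {0, v} ∈ Set.range (apEdge d) ↔ v = d ∨ v = -d := by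
  have hv : ({0, v} : Finset G) = apEdge v 0 := by rw [apEdge, zero_add]
  simp only [hv, Set.mem_range, apEdge_eq_apEdge_iff]
  grind

theorem apEdge_injective {d : G} (hd : 2 • d ≠ 0) : Function.Injective (apEdge d) := by
  intro i j hij
  rw [apEdge_eq_apEdge_iff] at hij
  grind

theorem disjoint_range_apEdge {d e : G} (hsub : d ≠ e) (hadd : d ≠ -e) :
    Disjoint (Set.range (apEdge d)) (Set.range (apEdge e)) := by
  rw [Set.disjoint_range_iff]
  intro i j hij
  rw [apEdge_eq_apEdge_iff] at hij
  grind

theorem apEdge_subset_apTriangle_iff {d : G} (hd : d ≠ 0) (a i j : G) :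
    apEdge d i ⊆ apTriangle a j ↔
      d = a ∧ (j = i ∨ j = i - a) ∨ d = -a ∧ (j = i - a ∨ j = i - 2 • a) ∨
        d = 2 • a ∧ j = i ∨ d = -(2 • a) ∧ j = i - 2 • a := by
  simp only [apEdge, apTriangle, insert_subset_iff, singleton_subset_iff, mem_insert,
    mem_singleton]
  grind

theorem apEdge_subset_apTriangle (d i : G) : apEdge d i ⊆ apTriangle d i := by
  simp [apEdge, apTriangle, insert_subset_iff]

theorem apEdge_two_nsmul_subset_apTriangle (d i : G) : apEdge (2 • d) i ⊆ apTriangle d i := by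
  simp [apEdge, apTriangle, insert_subset_iff, two_nsmul, add_assoc]

theorem apTriangle_injective {d : G} (h3 : 3 • d ≠ 0) (h4 : 4 • d ≠ 0) :
    Function.Injective (apTriangle d) := by
  intro i j hij
  have hsub : apEdge (2 • d) i ⊆ apTriangle d j := hij ▸ apEdge_two_nsmul_subset_apTriangle d i
  rw [apEdge_subset_apTriangle_iff (by grind)] at hsub
  grind

theorem edgesOf_range_apTriangle {d : G} (hd : 2 • d ≠ 0) :
    edgesOf (Set.range (apTriangle d)) =
      Set.range (apEdge d) ∪ Set.range (apEdge (2 • d)) := by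
  have faces (i : G) (e : Finset G) : e.card = 2 ∧ e ⊆ apTriangle d i ↔
      e = apEdge d i ∨ e = apEdge d (i + d) ∨ e = apEdge (2 • d) i := by
    rw [apTriangle, card_eq_two_and_subset_triple_iff (by grind) (by grind) (by grind), apEdge,
      apEdge, apEdge, two_nsmul, add_assoc i d d]
  ext e
  simp only [edgesOf, Set.mem_ofPred_eq, Set.mem_range, exists_exists_eq_and, ← exists_and_left,
    faces, Set.mem_union]
  grind

theorem setOf_apTriangle_superset_apEdge {d : G} (h2 : 2 • d ≠ 0) (h3 : 3 • d ≠ 0) (i : G) :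
    {s ∈ Set.range (apTriangle d) | apEdge d i ⊆ s} =
      {apTriangle d i, apTriangle d (i - d)} := by
  have hstart (j : G) : apEdge d i ⊆ apTriangle d j ↔ j = i ∨ j = i - d := by
    rw [apEdge_subset_apTriangle_iff (by grind)]
    grind
  ext s
  simp only [Set.mem_ofPred_eq, Set.mem_insert_iff, Set.mem_singleton_iff]
  grind

theorem setOf_apTriangle_superset_apEdge_two_nsmul {d : G} (h3 : 3 • d ≠ 0) (h4 : 4 • d ≠ 0)
    (i : G) :
    {s ∈ Set.range (apTriangle d) | apEdge (2 • d) i ⊆ s} = {apTriangle d i} := by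
  have hstart (j : G) : apEdge (2 • d) i ⊆ apTriangle d j ↔ j = i := by
    rw [apEdge_subset_apTriangle_iff (by grind)]
    grind
  ext s
  simp only [Set.mem_ofPred_eq, Set.mem_singleton_iff]
  grind

/-- The union of the difference cycles `(x : x : -2x)` and `(y : y : -2y)`. -/
def apComplex (x y : G) : Set (Finset G) := Set.range (apTriangle x) ∪ Set.range (apTriangle y)

theorem setOf_apComplex_superset (x y : G) (e : Finset G) :
    {s ∈ apComplex x y | e ⊆ s} =
      {s ∈ Set.range (apTriangle x) | e ⊆ s} ∪ {s ∈ Set.range (apTriangle y) | e ⊆ s} :=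
  Set.sep_union

theorem apComplex_comm (x y : G) : apComplex x y = apComplex y x := Set.union_comm _ _

end Progressions

/-- Two steps `x` and `y` such that the three-term progressions of step `x` and those of step `y`
share their long edges (because `2x = -2y`) and are otherwise nondegenerate: the elements `±x`,
`±y`, `±2x` are then distinct and nonzero, so the link of a vertex in `apComplex x y` has six
vertices. -/
structure IsHexagonalPair {G : Type*} [AddCommGroup G] (x y : G) : Prop where
  two_nsmul_add_eq_zero : 2 • x + 2 • y = 0
  three_nsmul_left_ne_zero : 3 • x ≠ 0
  three_nsmul_right_ne_zero : 3 • y ≠ 0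
  four_nsmul_left_ne_zero : 4 • x ≠ 0
  add_ne_zero : x + y ≠ 0

namespace IsHexagonalPair

section Arithmetic

variable {G : Type*} [AddCommGroup G] {x y : G}

theorem two_nsmul_right_eq (h : IsHexagonalPair x y) : (2 • y : G) = -(2 • x) :=
  eq_neg_of_add_eq_zero_right h.two_nsmul_add_eq_zero

theorem four_nsmul_right_ne_zero (h : IsHexagonalPair x y) : 4 • y ≠ 0 := by
  have hneg : (4 • y : G) = -(4 • x) := by
    rw [show 4 = 2 * 2 from rfl, mul_nsmul, h.two_nsmul_right_eq, smul_neg, ← mul_nsmul]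
  rw [hneg, neg_ne_zero]
  exact h.four_nsmul_left_ne_zero

theorem symm (h : IsHexagonalPair x y) : IsHexagonalPair y x where
  two_nsmul_add_eq_zero := by rw [add_comm, h.two_nsmul_add_eq_zero]
  three_nsmul_left_ne_zero := h.three_nsmul_right_ne_zero
  three_nsmul_right_ne_zero := h.three_nsmul_left_ne_zero
  four_nsmul_left_ne_zero := h.four_nsmul_right_ne_zero
  add_ne_zero := by rw [add_comm]; exact h.add_ne_zero

theorem two_nsmul_left_ne_zero (h : IsHexagonalPair x y) : 2 • x ≠ 0 := by
  grind [h.four_nsmul_left_ne_zero]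

theorem left_ne_neg_right (h : IsHexagonalPair x y) : x ≠ -y :=
  fun hxy => h.add_ne_zero (add_eq_zero_iff_eq_neg.mpr hxy)

theorem left_ne_right (h : IsHexagonalPair x y) : x ≠ y := by
  rintro rfl
  grind [h.two_nsmul_add_eq_zero, h.four_nsmul_left_ne_zero]

theorem left_ne_two_nsmul_right (h : IsHexagonalPair x y) : x ≠ 2 • y := by
  rw [h.two_nsmul_right_eq]
  grind [h.three_nsmul_left_ne_zero]

theorem left_ne_neg_two_nsmul_right (h : IsHexagonalPair x y) : x ≠ -(2 • y) := by
  rw [h.two_nsmul_right_eq]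
  grind [h.four_nsmul_left_ne_zero]

end Arithmetic

variable {G : Type*} [AddCommGroup G] [DecidableEq G] {x y : G}

theorem not_apEdge_subset_apTriangle (h : IsHexagonalPair x y) (i j : G) :
    ¬ apEdge x i ⊆ apTriangle y j := by
  rw [apEdge_subset_apTriangle_iff (by grind [h.four_nsmul_left_ne_zero])]
  simp only [h.left_ne_right, h.left_ne_neg_right, h.left_ne_two_nsmul_right,
    h.left_ne_neg_two_nsmul_right, false_and, or_self, not_false_eq_true]

theorem apTriangle_injective_left (h : IsHexagonalPair x y) : Function.Injective (apTriangle x) :=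
  apTriangle_injective h.three_nsmul_left_ne_zero h.four_nsmul_left_ne_zero

theorem apTriangle_ne_apTriangle (h : IsHexagonalPair x y) (i j : G) :
    apTriangle x i ≠ apTriangle y j :=
  fun hij => h.not_apEdge_subset_apTriangle i j (hij ▸ apEdge_subset_apTriangle x i)

theorem apEdge_two_nsmul_left_eq (h : IsHexagonalPair x y) (i : G) :
    apEdge (2 • x) i = apEdge (2 • y) (i + 2 • x) := by
  rw [h.two_nsmul_right_eq, apEdge_neg, add_sub_cancel_right]

theorem edgesOf_apComplex (h : IsHexagonalPair x y) :
    edgesOf (apComplex x y) =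
      Set.range (apEdge x) ∪ Set.range (apEdge y) ∪ Set.range (apEdge (2 • x)) := by
  rw [apComplex, edgesOf_union, edgesOf_range_apTriangle h.two_nsmul_left_ne_zero,
    edgesOf_range_apTriangle h.symm.two_nsmul_left_ne_zero, h.two_nsmul_right_eq, range_apEdge_neg,
    ← Set.union_union_distrib_right]

theorem ncard_apComplex_superset_apEdge_left (h : IsHexagonalPair x y) (i : G) :
    {s ∈ apComplex x y | apEdge x i ⊆ s}.ncard = 2 := by
  have hright : {s ∈ Set.range (apTriangle y) | apEdge x i ⊆ s} = ∅ := by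
    rw [Set.sep_eq_empty_iff_mem_false, Set.forall_mem_range]
    exact h.not_apEdge_subset_apTriangle i
  rw [setOf_apComplex_superset, hright, Set.union_empty,
    setOf_apTriangle_superset_apEdge h.two_nsmul_left_ne_zero h.three_nsmul_left_ne_zero,
    Set.ncard_pair]
  refine h.apTriangle_injective_left.ne ?_
  grind [h.four_nsmul_left_ne_zero]

theorem ncard_apComplex_superset_apEdge_two_nsmul (h : IsHexagonalPair x y) (i : G) :
    {s ∈ apComplex x y | apEdge (2 • x) i ⊆ s}.ncard = 2 := by
  have hleft : {s ∈ Set.range (apTriangle x) | apEdge (2 • x) i ⊆ s} = {apTriangle x i} :=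
    setOf_apTriangle_superset_apEdge_two_nsmul h.three_nsmul_left_ne_zero
      h.four_nsmul_left_ne_zero i
  have hright : {s ∈ Set.range (apTriangle y) | apEdge (2 • x) i ⊆ s} =
      {apTriangle y (i + 2 • x)} := by
    rw [h.apEdge_two_nsmul_left_eq]
    exact setOf_apTriangle_superset_apEdge_two_nsmul h.three_nsmul_right_ne_zero
      h.four_nsmul_right_ne_zero _
  rw [setOf_apComplex_superset, hleft, hright, Set.singleton_union,
    Set.ncard_pair (h.apTriangle_ne_apTriangle _ _)]

theorem ncard_superset_of_mem_edgesOf (h : IsHexagonalPair x y) {e : Finset G}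
    (he : e ∈ edgesOf (apComplex x y)) : {s ∈ apComplex x y | e ⊆ s}.ncard = 2 := by
  rw [h.edgesOf_apComplex] at he
  obtain (⟨i, rfl⟩ | ⟨i, rfl⟩) | ⟨i, rfl⟩ := he
  · exact h.ncard_apComplex_superset_apEdge_left i
  · rw [apComplex_comm]
    exact h.symm.ncard_apComplex_superset_apEdge_left i
  · exact h.ncard_apComplex_superset_apEdge_two_nsmul i

theorem ncard_apComplex [Finite G] (h : IsHexagonalPair x y) :
    (apComplex x y).ncard = 2 * Nat.card G := by
  have hdisj : Disjoint (Set.range (apTriangle x)) (Set.range (apTriangle y)) :=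
    Set.disjoint_range_iff.mpr h.apTriangle_ne_apTriangle
  rw [apComplex, Set.ncard_union_eq hdisj,
    Set.ncard_range_of_injective h.apTriangle_injective_left,
    Set.ncard_range_of_injective h.symm.apTriangle_injective_left, two_mul]

theorem ncard_edgesOf_apComplex [Finite G] (h : IsHexagonalPair x y) :
    (edgesOf (apComplex x y)).ncard = 3 * Nat.card G := by
  have hxy : Disjoint (Set.range (apEdge x)) (Set.range (apEdge y)) :=
    disjoint_range_apEdge h.left_ne_right h.left_ne_neg_right
  have hx : Disjoint (Set.range (apEdge x)) (Set.range (apEdge (2 • x))) :=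
    disjoint_range_apEdge (by grind [h.four_nsmul_left_ne_zero])
      (by grind [h.three_nsmul_left_ne_zero])
  have hy : Disjoint (Set.range (apEdge y)) (Set.range (apEdge (2 • x))) :=
    disjoint_range_apEdge h.symm.left_ne_two_nsmul_right h.symm.left_ne_neg_two_nsmul_right
  have h2x : 2 • (2 • x) ≠ 0 := by grind [h.four_nsmul_left_ne_zero]
  rw [h.edgesOf_apComplex, Set.ncard_union_eq (hx.union_left hy), Set.ncard_union_eq hxy,
    Set.ncard_range_of_injective (apEdge_injective h.two_nsmul_left_ne_zero),
    Set.ncard_range_of_injective (apEdge_injective h.symm.two_nsmul_left_ne_zero),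
    Set.ncard_range_of_injective (apEdge_injective h2x)]
  ring

theorem setOf_adjacent_zero (h : IsHexagonalPair x y) :
    {v | v ≠ 0 ∧ ∃ s ∈ apComplex x y, 0 ∈ s ∧ v ∈ s} =
      ↑({x, 2 • x, -x, -(2 • x), y, -y} : Finset G) := by
  ext v
  rw [Set.mem_ofPred_eq, ne_comm, ← pair_mem_edgesOf_iff, h.edgesOf_apComplex]
  simp only [Set.mem_union, zero_pair_mem_range_apEdge_iff, mem_coe, mem_insert, mem_singleton]
  tauto

theorem card_neighbors_zero (h : IsHexagonalPair x y) :
    ({x, 2 • x, -x, -(2 • x), y, -y} : Finset G).card = 6 := by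
  have h3x := h.three_nsmul_left_ne_zero
  have h4x := h.four_nsmul_left_ne_zero
  have h4y := h.four_nsmul_right_ne_zero
  have hxy := h.left_ne_right
  have hxy' := h.left_ne_neg_right
  have hyx := h.symm.left_ne_two_nsmul_right
  have hyx' := h.symm.left_ne_neg_two_nsmul_right
  repeat rw [card_insert_of_notMem (by simp only [mem_insert, mem_singleton]; grind)]
  rw [card_singleton]

end IsHexagonalPair

theorem stmt_10_general {G : Type*} [AddCommGroup G] [DecidableEq G] [Finite G] {x y : G}
    (h : IsHexagonalPair x y) :
    let V : Finset G := {x, 2 • x, -x, -(2 • x), y, -y}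
    V.card = 6 ∧ 0 ∉ V ∧
    {v : G | v ≠ 0 ∧ ∃ s ∈ apComplex x y, 0 ∈ s ∧ v ∈ s} = ↑V ∧
    (∀ e : Finset G, e.card = 2 → (∃ s ∈ apComplex x y, e ⊆ s) →
      {s ∈ apComplex x y | e ⊆ s}.ncard = 2) ∧
    (apComplex x y).ncard = 2 * Nat.card G ∧
    {e : Finset G | e.card = 2 ∧ ∃ s ∈ apComplex x y, e ⊆ s}.ncard = 3 * Nat.card G := by
  intro V
  have hzero : 0 ∉ V := by
    rw [← mem_coe, ← h.setOf_adjacent_zero]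
    exact fun h0 => h0.1 rfl
  exact ⟨h.card_neighbors_zero, hzero, h.setOf_adjacent_zero,
    fun e he hs => h.ncard_superset_of_mem_edgesOf ⟨he, hs⟩, h.ncard_apComplex,
    h.ncard_edgesOf_apComplex⟩

theorem natCast_zmod_eq_neg_of_add_eq {n a b : ℕ} (h : a + b = n) : (a : ZMod n) = -b := by
  rw [eq_neg_iff_add_eq_zero, ← Nat.cast_add, h, ZMod.natCast_self]

theorem natCast_zmod_ne_zero_of_lt_two_mul_s10 {n m : ℕ} (h0 : m ≠ 0) (hlt : m < 2 * n)
    (hne : m ≠ n) : (m : ZMod n) ≠ 0 := by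
  rw [Ne, ZMod.natCast_eq_zero_iff]
  exact fun hdvd => hne (Nat.eq_of_dvd_of_lt_two_mul h0 hdvd hlt)

theorem isHexagonalPair_natCast {k l : ℕ} (hl : 1 ≤ l) (hlk : 2 * l < k) (h3 : 3 * l ≠ k) :
    IsHexagonalPair (l : ZMod (2 * k)) ((k - l : ℕ) : ZMod (2 * k)) := by
  constructor <;> simp only [nsmul_eq_mul, ← Nat.cast_mul, ← Nat.cast_add]
  · rw [← mul_add, Nat.add_sub_cancel' (by lia), ZMod.natCast_self]
  all_goals exact natCast_zmod_ne_zero_of_lt_two_mul_s10 (by lia) (by lia) (by lia)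

theorem dc_self_eq_range_apTriangle (n a : ℕ) : dc n a a = Set.range (apTriangle (a : ZMod n)) := by
  ext s
  simp only [dc, apTriangle, Set.mem_ofPred_eq, Set.mem_range, eq_comm]

theorem Sln_eq_apComplex (k l : ℕ) :
    Sln k l = apComplex (l : ZMod (2 * k)) ((k - l : ℕ) : ZMod (2 * k)) := by
  rw [Sln, dc_self_eq_range_apTriangle, dc_self_eq_range_apTriangle, apComplex]

/-- For `k ≥ 3`, `1 ≤ l ≤ ⌊(k−1)/2⌋` and `3l ≠ k`: the six elements
`l, 2l, 2k−l, 2k−2l, k−l, k+l` of `ℤ/2kℤ` are pairwise distinct, nonzero, and are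
exactly the vertices joined to `0` in `S_{l,2k}`; every edge of `S_{l,2k}` lies in
exactly two triangles; `S_{l,2k}` has `4k` triangles and `6k` edges, hence Euler
characteristic `2k − 6k + 4k = 0`. -/
theorem stmt_10 (k l : ℕ) (hk : 3 ≤ k) (hl : 1 ≤ l) (hl2 : l ≤ (k - 1) / 2)
    (h3 : 3 * l ≠ k) :
    let V : Finset (ZMod (2 * k)) :=
      {(l : ZMod (2 * k)), ((2 * l : ℕ) : ZMod (2 * k)),
       ((2 * k - l : ℕ) : ZMod (2 * k)), ((2 * k - 2 * l : ℕ) : ZMod (2 * k)),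
       ((k - l : ℕ) : ZMod (2 * k)), ((k + l : ℕ) : ZMod (2 * k))}
    V.card = 6 ∧ (0 : ZMod (2 * k)) ∉ V ∧
    {v : ZMod (2 * k) | v ≠ 0 ∧ ∃ s ∈ Sln k l, 0 ∈ s ∧ v ∈ s} = ↑V ∧
    (∀ e : Finset (ZMod (2 * k)), e.card = 2 → (∃ s ∈ Sln k l, e ⊆ s) →
      {s ∈ Sln k l | e ⊆ s}.ncard = 2) ∧
    (Sln k l).ncard = 4 * k ∧
    {e : Finset (ZMod (2 * k)) | e.card = 2 ∧ ∃ s ∈ Sln k l, e ⊆ s}.ncard = 6 * k ∧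
    (2 * k : ℤ) - (6 * k : ℤ) + (4 * k : ℤ) = 0 := by
  have : NeZero (2 * k) := ⟨by lia⟩
  have hpair := isHexagonalPair_natCast hl (by lia) h3
  have htwo : ((2 * l : ℕ) : ZMod (2 * k)) = 2 • (l : ZMod (2 * k)) := by simp
  have hnegl : ((2 * k - l : ℕ) : ZMod (2 * k)) = -l :=
    natCast_zmod_eq_neg_of_add_eq (by lia)
  have hneg2l : ((2 * k - 2 * l : ℕ) : ZMod (2 * k)) = -((2 * l : ℕ) : ZMod (2 * k)) :=
    natCast_zmod_eq_neg_of_add_eq (by lia)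
  have hkl : ((k + l : ℕ) : ZMod (2 * k)) = -((k - l : ℕ) : ZMod (2 * k)) :=
    natCast_zmod_eq_neg_of_add_eq (by lia)
  obtain ⟨hV, h0, hnbr, hinc, htri, hedge⟩ := stmt_10_general hpair
  rw [Nat.card_zmod] at htri hedge
  simp only [hnegl, hneg2l, hkl, htwo, Sln_eq_apComplex]
  exact ⟨hV, h0, hnbr, hinc, by lia, by lia, by lia⟩
end

section
/- Let k ≥ 3 with k ≡ 0 (mod 3). Then in the partition of skel₂(β^k) into the complexes S_{l,j,2k} (over pairs 0 < l < j < 2k − l − j with k ∉ {l, j, l + j}) and S_{l,2k} (over 1 ≤ l ≤ ⌊(k−1)/2⌋), the part S_{k/3,2k} has exactly 8k/3 members and has k/3 connected components, each with 6 vertices and 8 triangles, while all other parts number k(k−3)/3 in total and each has exactly 4k members. -/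
/-- The parameter range for the pairs `(l, j)`: `0 < l < j < 2k − l − j` and
`k ∉ {l, j, l + j}`. -/
def goodPair (k : ℕ) (p : ℕ × ℕ) : Prop :=
  0 < p.1 ∧ p.1 < p.2 ∧ p.1 + 2 * p.2 < 2 * k ∧ k ≠ p.1 ∧ k ≠ p.2 ∧ k ≠ p.1 + p.2

/-- The parameter range for `l`: `1 ≤ l ≤ ⌊(k−1)/2⌋`. -/
def goodL (k l : ℕ) : Prop := 1 ≤ l ∧ l ≤ (k - 1) / 2

/-! The triangle of the difference cycle `(a : b : c)` starting at `i` is also the triangle of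
`(b : c : a)` starting at `i + a`, and these rotations are the only coincidences. Hence a difference
cycle has `n` members unless `a = b = c`; in that case the triangle only depends on `i` modulo `a`,
which leaves `a` members. Among all parts, this exceptional cycle `(2m : 2m : 2m)` occurs only in
`S_{m,2k}` with `k = 3m`. There all differences are multiples of `m`, so the connected components
are the residue classes modulo `m`. The other parts are counted through the partitions of `2k` into
three distinct parts: those with a part equal to `k` are exactly the `l + (k - l) + k`. -/

/-- The triangle of the difference cycle `(a : b : n - a - b)` that starts at the vertex `i`. -/
def dcTriangle (n a b : ℕ) (i : ZMod n) : Finset (ZMod n) :=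
  {i, i + a, i + a + b}

/-- The partitions of `n` into three distinct positive parts, each encoded by the pair of its
smallest and its middle part. -/
def threeDistinctParts (n : ℕ) : Set (ℕ × ℕ) :=
  {p | 0 < p.1 ∧ p.1 < p.2 ∧ p.1 + 2 * p.2 < n}

section DifferenceCycles

variable {n a b c a' b' : ℕ}

lemma mem_dcTriangle {i v : ZMod n} :
    v ∈ dcTriangle n a b i ↔ v = i ∨ v = i + a ∨ v = i + a + b := by
  simp only [dcTriangle, Finset.mem_insert, Finset.mem_singleton]

lemma self_mem_dcTriangle (i : ZMod n) : i ∈ dcTriangle n a b i :=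
  mem_dcTriangle.2 (Or.inl rfl)

lemma dc_eq_range_dcTriangle : dc n a b = Set.range (dcTriangle n a b) := by
  ext s
  exact exists_congr fun i => eq_comm

lemma dcTriangle_rotate (hn : a + b + c = n) (i : ZMod n) :
    dcTriangle n b c (i + a) = dcTriangle n a b i := by
  have sum_eq_zero : (a + b + c : ZMod n) = 0 := by
    rw [← Nat.cast_add, ← Nat.cast_add, hn, ZMod.natCast_self]
  have third_eq : i + a + b + c = i := by linear_combination sum_eq_zero
  ext v
  rw [mem_dcTriangle, mem_dcTriangle, third_eq]
  tauto

lemma eq_of_dcTriangle_eq_of_same_start {i : ZMod n} (hab : a + b < n)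
    (ha' : 0 < a') (hb' : 0 < b') (hab' : a' + b' < n)
    (h : dcTriangle n a b i = dcTriangle n a' b' i) : a' = a ∧ b' = b := by
  have natCast_inj {x y : ℕ} (hx : x < n) (hy : y < n) : (x : ZMod n) = y ↔ x = y :=
    (CharP.natCast_injOn_Iio (ZMod n) n).eq_iff hx hy
  have offsets_eq (x : ℕ) (hx : x < n) :
      (x = 0 ∨ x = a ∨ x = a + b) ↔ (x = 0 ∨ x = a' ∨ x = a' + b') := by
    have := Finset.ext_iff.1 h (i + x)
    simp only [mem_dcTriangle, add_assoc, add_eq_left, add_right_inj] at this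
    rwa [← Nat.cast_add, ← Nat.cast_add, ← Nat.cast_zero, natCast_inj hx (by omega),
      natCast_inj hx (by omega), natCast_inj hx hab, natCast_inj hx (by omega),
      natCast_inj hx hab'] at this
  have := offsets_eq a (by omega)
  have := offsets_eq (a + b) hab
  have := offsets_eq a' (by omega)
  have := offsets_eq (a' + b') hab'
  omega

lemma rotation_of_dcTriangle_eq {i i' : ZMod n} (ha : 0 < a) (hb : 0 < b) (hc : 0 < c)
    (hn : a + b + c = n) (ha' : 0 < a') (hb' : 0 < b') (hab' : a' + b' < n)
    (h : dcTriangle n a b i = dcTriangle n a' b' i') :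
    (i' = i ∧ a' = a ∧ b' = b) ∨ (i' = i + a ∧ a' = b ∧ b' = c) ∨
      (i' = i + a + b ∧ a' = c ∧ b' = a) := by
  have start_mem : i' ∈ dcTriangle n a b i := h ▸ self_mem_dcTriangle i'
  rcases mem_dcTriangle.1 start_mem with rfl | rfl | rfl
  · exact Or.inl ⟨rfl, eq_of_dcTriangle_eq_of_same_start (by omega) ha' hb' hab' h⟩
  · rw [← dcTriangle_rotate hn] at h
    exact Or.inr (Or.inl
      ⟨rfl, eq_of_dcTriangle_eq_of_same_start (by omega) ha' hb' hab' h⟩)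
  · rw [← dcTriangle_rotate hn, ← dcTriangle_rotate (c := a) (by omega)] at h
    exact Or.inr (Or.inr
      ⟨rfl, eq_of_dcTriangle_eq_of_same_start (by omega) ha' hb' hab' h⟩)

lemma dcTriangle_injective (ha : 0 < a) (hb : 0 < b) (hc : 0 < c) (hn : a + b + c = n)
    (hne : ¬(a = b ∧ b = c)) : Function.Injective (dcTriangle n a b) := by
  intro i i' h
  rcases rotation_of_dcTriangle_eq ha hb hc hn ha hb (by omega) h with
    ⟨rfl, -⟩ | ⟨-, h⟩ | ⟨-, h⟩
  · rfl
  · omega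
  · omega

lemma ncard_dc (ha : 0 < a) (hb : 0 < b) (hc : 0 < c) (hn : a + b + c = n)
    (hne : ¬(a = b ∧ b = c)) : (dc n a b).ncard = n := by
  rw [dc_eq_range_dcTriangle, ← Set.image_univ,
    Set.ncard_image_of_injective _ (dcTriangle_injective ha hb hc hn hne), Set.ncard_univ,
    Nat.card_zmod]

lemma disjoint_dc (ha : 0 < a) (hb : 0 < b) (hc : 0 < c) (hn : a + b + c = n)
    (ha' : 0 < a') (hb' : 0 < b') (hab' : a' + b' < n) (hne₀ : ¬(a' = a ∧ b' = b))
    (hne₁ : ¬(a' = b ∧ b' = c)) (hne₂ : ¬(a' = c ∧ b' = a)) :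
    Disjoint (dc n a b) (dc n a' b') := by
  rw [dc_eq_range_dcTriangle, dc_eq_range_dcTriangle, Set.disjoint_left]
  rintro _ ⟨i, rfl⟩ ⟨i', h⟩
  have := rotation_of_dcTriangle_eq ha hb hc hn ha' hb' hab' h.symm
  tauto

end DifferenceCycles

section Residues

lemma eq_of_periodic_of_castHom_eq {α : Type*} {n m : ℕ} {f : ZMod n → α}
    (hf : Function.Periodic f (m : ZMod n)) (hmn : m ∣ n) {u v : ZMod n}
    (h : ZMod.castHom hmn (ZMod m) u = ZMod.castHom hmn (ZMod m) v) : f u = f v := by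
  obtain ⟨x, rfl⟩ := ZMod.intCast_surjective u
  obtain ⟨y, rfl⟩ := ZMod.intCast_surjective v
  rw [map_intCast, map_intCast, ZMod.intCast_eq_intCast_iff_dvd_sub] at h
  obtain ⟨t, ht⟩ := h
  have hy : (y : ZMod n) = x + t * m := by
    rw [eq_add_of_sub_eq' ht]
    push_cast
    ring
  rw [hy, hf.int_mul t x]

lemma ncard_castHom_fiber {n m : ℕ} [NeZero n] (hmn : m ∣ n) (x : ZMod m) :
    (ZMod.castHom hmn (ZMod m) ⁻¹' {x}).ncard = n / m := by
  set π := (ZMod.castHom hmn (ZMod m)).toAddMonoidHom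
  have π_surjective : Function.Surjective π := ZMod.castHom_surjective hmn
  obtain ⟨u, rfl⟩ := π_surjective x
  have fiber_eq : ZMod.castHom hmn (ZMod m) ⁻¹' {π u} = (u + ·) '' (π.ker : Set (ZMod n)) := by
    ext v
    refine ⟨fun h => ⟨v - u, ?_, add_sub_cancel u v⟩, ?_⟩
    · exact (map_sub π v u).trans (sub_eq_zero.2 h)
    · rintro ⟨w, hw, rfl⟩
      exact (map_add π u w).trans (by rw [hw, add_zero])
  have card_ker_mul : Nat.card π.ker * m = n := by
    have := π.ker.card_mul_index
    rwa [AddSubgroup.index_ker, AddMonoidHom.range_eq_top.2 π_surjective, AddSubgroup.card_top,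
      Nat.card_zmod, Nat.card_zmod] at this
  have m_pos : 0 < m := Nat.pos_of_dvd_of_pos hmn (NeZero.pos n)
  rw [fiber_eq, Set.ncard_image_of_injective _ (add_right_injective u)]
  exact (Nat.div_eq_of_eq_mul_left m_pos card_ker_mul.symm).symm

lemma ncard_image_preimage_of_eq_iff {α β γ : Type*} {f : α → γ} {g : α → β}
    (hg : Function.Surjective g) (hfg : ∀ u v, f u = f v ↔ g u = g v) (B : Set β) :
    (f '' (g ⁻¹' B)).ncard = B.ncard := by
  obtain ⟨r, hr⟩ := hg.hasRightInverse
  have image_eq : f '' (g ⁻¹' B) = (f ∘ r) '' B := by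
    ext y
    constructor
    · rintro ⟨u, hu, rfl⟩
      exact ⟨g u, hu, (hfg _ _).2 (hr _)⟩
    · rintro ⟨x, hx, rfl⟩
      exact ⟨r x, by rwa [Set.mem_preimage, hr], rfl⟩
  have injective : Function.Injective (f ∘ r) := fun x y h => by
    simpa only [hr _] using (hfg _ _).1 h
  rw [image_eq, Set.ncard_image_of_injective _ injective]

lemma ncard_range_of_eq_iff {α β γ : Type*} {f : α → γ} {g : α → β}
    (hg : Function.Surjective g) (hfg : ∀ u v, f u = f v ↔ g u = g v) :
    (Set.range f).ncard = Nat.card β := by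
  rw [← Set.image_univ, ← Set.preimage_univ (f := g), ncard_image_preimage_of_eq_iff hg hfg,
    Set.ncard_univ]

variable {n m a b : ℕ}

lemma castHom_eq_of_mem_dcTriangle (hmn : m ∣ n) (ha : m ∣ a) (hb : m ∣ b) {i v : ZMod n}
    (hv : v ∈ dcTriangle n a b i) :
    ZMod.castHom hmn (ZMod m) v = ZMod.castHom hmn (ZMod m) i := by
  have ha₀ : (a : ZMod m) = 0 := (ZMod.natCast_eq_zero_iff _ _).2 ha
  have hb₀ : (b : ZMod m) = 0 := (ZMod.natCast_eq_zero_iff _ _).2 hb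
  rcases mem_dcTriangle.1 hv with rfl | rfl | rfl <;>
    simp only [map_add, map_natCast, ha₀, hb₀, add_zero]

lemma setOf_mem_dc_castHom_eq (hmn : m ∣ n) (ha : m ∣ a) (hb : m ∣ b) (x : ZMod m) :
    {s | s ∈ dc n a b ∧ ∀ v ∈ s, ZMod.castHom hmn (ZMod m) v = x} =
      dcTriangle n a b '' (ZMod.castHom hmn (ZMod m) ⁻¹' {x}) := by
  rw [dc_eq_range_dcTriangle]
  ext s
  constructor
  · rintro ⟨⟨i, rfl⟩, h⟩
    exact ⟨i, h i (self_mem_dcTriangle i), rfl⟩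
  · rintro ⟨i, hi, rfl⟩
    exact ⟨⟨i, rfl⟩, fun v hv => (castHom_eq_of_mem_dcTriangle hmn ha hb hv).trans hi⟩

lemma dcTriangle_eq_iff_castHom_eq (hn : m + m + m = n) (hmn : m ∣ n) (u v : ZMod n) :
    dcTriangle n m m u = dcTriangle n m m v ↔
      ZMod.castHom hmn (ZMod m) u = ZMod.castHom hmn (ZMod m) v := by
  constructor
  · intro h
    exact castHom_eq_of_mem_dcTriangle hmn dvd_rfl dvd_rfl (h ▸ self_mem_dcTriangle u)
  · have periodic : Function.Periodic (dcTriangle n m m) (m : ZMod n) := dcTriangle_rotate hn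
    exact eq_of_periodic_of_castHom_eq periodic hmn

lemma ncard_dc_of_three_mul (hn : m + m + m = n) : (dc n m m).ncard = m := by
  have hmn : m ∣ n := ⟨3, by omega⟩
  rw [dc_eq_range_dcTriangle, ncard_range_of_eq_iff (ZMod.castHom_surjective hmn)
    (dcTriangle_eq_iff_castHom_eq hn hmn), Nat.card_zmod]

end Residues

section Components

variable {n m : ℕ} {S : Set (Finset (ZMod n))}

lemma connectedComponentMk_eq_of_mem {s : Finset (ZMod n)} (hs : s ∈ S) {v w : ZMod n}
    (hv : v ∈ s) (hw : w ∈ s) :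
    (cGraph n S).connectedComponentMk v = (cGraph n S).connectedComponentMk w := by
  rcases eq_or_ne v w with rfl | hvw
  · rfl
  · exact SimpleGraph.ConnectedComponent.sound
      (SimpleGraph.Adj.reachable ⟨hvw, Or.inl ⟨s, hs, hv, hw⟩⟩)

lemma eq_of_connectedComponentMk_eq {α : Type*} {f : ZMod n → α}
    (hf : ∀ s ∈ S, ∀ v ∈ s, ∀ w ∈ s, f v = f w) {u v : ZMod n}
    (h : (cGraph n S).connectedComponentMk u = (cGraph n S).connectedComponentMk v) :
    f u = f v := by
  obtain ⟨walk⟩ := SimpleGraph.ConnectedComponent.exact h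
  induction walk with
  | nil => rfl
  | cons adj tail ih =>
    refine Eq.trans ?_ (ih (SimpleGraph.ConnectedComponent.sound tail.reachable))
    rcases adj with ⟨-, ⟨s, hs, hx, hy⟩ | ⟨s, hs, hy, hx⟩⟩ <;> exact hf s hs _ hx _ hy

end Components

section Parts

variable {k l j : ℕ}

lemma ncard_Sljn (hl : 0 < l) (hlj : l < j) (hj : l + 2 * j < 2 * k) :
    (Sljn k l j).ncard = 4 * k := by
  have : NeZero k := ⟨by omega⟩
  have disjoint : Disjoint (dc (2 * k) l j) (dc (2 * k) l (2 * k - l - j)) := by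
    apply disjoint_dc (c := 2 * k - l - j) <;> omega
  rw [Sljn, Set.ncard_union_eq disjoint, ncard_dc (c := 2 * k - l - j), ncard_dc (c := j)] <;> omega

lemma ncard_Sln_eq_add (hl : 0 < l) (hlk : 2 * l < k) :
    (Sln k l).ncard = 2 * k + (dc (2 * k) (k - l) (k - l)).ncard := by
  have : NeZero k := ⟨by omega⟩
  have disjoint : Disjoint (dc (2 * k) l l) (dc (2 * k) (k - l) (k - l)) := by
    apply disjoint_dc (c := 2 * k - l - l) <;> omega
  rw [Sln, Set.ncard_union_eq disjoint, ncard_dc (c := 2 * k - l - l)] <;> omega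

lemma ncard_Sln_of_three_mul_ne (hl : 0 < l) (hlk : 2 * l < k) (hne : 3 * l ≠ k) :
    (Sln k l).ncard = 4 * k := by
  rw [ncard_Sln_eq_add hl hlk, ncard_dc (c := 2 * l)] <;> omega

end Parts

section ExceptionalPart

variable {m : ℕ}

lemma Sln_three_mul :
    Sln (3 * m) m = dc (2 * (3 * m)) m m ∪ dc (2 * (3 * m)) (2 * m) (2 * m) := by
  rw [Sln, show 3 * m - m = 2 * m by omega]

lemma ncard_Sln_three_mul (hm : 0 < m) : (Sln (3 * m) m).ncard = 8 * m := by
  rw [ncard_Sln_eq_add hm (by omega), show 3 * m - m = 2 * m by omega,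
    ncard_dc_of_three_mul (by omega)]
  omega

lemma connectedComponentMk_Sln_eq_iff (hmn : m ∣ 2 * (3 * m)) (u v : ZMod (2 * (3 * m))) :
    (cGraph (2 * (3 * m)) (Sln (3 * m) m)).connectedComponentMk u =
        (cGraph (2 * (3 * m)) (Sln (3 * m) m)).connectedComponentMk v ↔
      ZMod.castHom hmn (ZMod m) u = ZMod.castHom hmn (ZMod m) v := by
  rw [Sln_three_mul, dc_eq_range_dcTriangle, dc_eq_range_dcTriangle]
  constructor
  · refine eq_of_connectedComponentMk_eq ?_
    have hm2 : m ∣ 2 * m := dvd_mul_left m 2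
    rintro _ (⟨i, rfl⟩ | ⟨i, rfl⟩) v hv w hw
    · rw [castHom_eq_of_mem_dcTriangle hmn dvd_rfl dvd_rfl hv,
        castHom_eq_of_mem_dcTriangle hmn dvd_rfl dvd_rfl hw]
    · rw [castHom_eq_of_mem_dcTriangle hmn hm2 hm2 hv,
        castHom_eq_of_mem_dcTriangle hmn hm2 hm2 hw]
  · refine eq_of_periodic_of_castHom_eq (fun i => ?_) hmn
    exact connectedComponentMk_eq_of_mem (Or.inl ⟨i, rfl⟩)
      (mem_dcTriangle.2 (Or.inr (Or.inl rfl))) (self_mem_dcTriangle i)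

lemma card_connectedComponent_Sln_three_mul :
    Nat.card (cGraph (2 * (3 * m)) (Sln (3 * m) m)).ConnectedComponent = m := by
  have hmn : m ∣ 2 * (3 * m) := ⟨6, by ring⟩
  have mk_surjective :
      Function.Surjective (cGraph (2 * (3 * m)) (Sln (3 * m) m)).connectedComponentMk :=
    Quot.mk_surjective
  rw [← Set.ncard_univ, ← mk_surjective.range_eq, ncard_range_of_eq_iff
    (ZMod.castHom_surjective hmn) (connectedComponentMk_Sln_eq_iff hmn), Nat.card_zmod]

lemma ncard_dcTriangle_image_fiber (hm : 0 < m) (hmn : m ∣ 2 * (3 * m)) (x : ZMod m) :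
    (dcTriangle (2 * (3 * m)) (2 * m) (2 * m) '' (ZMod.castHom hmn (ZMod m) ⁻¹' {x})).ncard =
      2 := by
  have : NeZero m := ⟨hm.ne'⟩
  have hm2 : m ∣ 2 * m := dvd_mul_left m 2
  have h2mn : 2 * m ∣ 2 * (3 * m) := ⟨3, by ring⟩
  rw [← ZMod.castHom_comp hm2 h2mn, RingHom.coe_comp, Set.preimage_comp,
    ncard_image_preimage_of_eq_iff (ZMod.castHom_surjective h2mn)
      (dcTriangle_eq_iff_castHom_eq (by omega) h2mn),
    ncard_castHom_fiber, Nat.mul_div_cancel _ hm]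

lemma ncard_Sln_triangles_castHom_eq (hm : 0 < m) (hmn : m ∣ 2 * (3 * m)) (x : ZMod m) :
    {s | s ∈ Sln (3 * m) m ∧ ∀ v ∈ s, ZMod.castHom hmn (ZMod m) v = x}.ncard = 8 := by
  have : NeZero m := ⟨hm.ne'⟩
  have hm2 : m ∣ 2 * m := dvd_mul_left m 2
  have split : {s | s ∈ Sln (3 * m) m ∧ ∀ v ∈ s, ZMod.castHom hmn (ZMod m) v = x} =
      {s | s ∈ dc (2 * (3 * m)) m m ∧ ∀ v ∈ s, ZMod.castHom hmn (ZMod m) v = x} ∪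
        {s | s ∈ dc (2 * (3 * m)) (2 * m) (2 * m) ∧
          ∀ v ∈ s, ZMod.castHom hmn (ZMod m) v = x} := by
    rw [Sln_three_mul]
    exact Set.ext fun s => or_and_right
  have disjoint : Disjoint (dc (2 * (3 * m)) m m) (dc (2 * (3 * m)) (2 * m) (2 * m)) := by
    apply disjoint_dc (c := 4 * m) <;> omega
  have small_injective : Function.Injective (dcTriangle (2 * (3 * m)) m m) := by
    apply dcTriangle_injective (c := 4 * m) <;> omega
  rw [split, Set.ncard_union_eq (disjoint.mono (fun _ h => h.1) (fun _ h => h.1)),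
    setOf_mem_dc_castHom_eq hmn dvd_rfl dvd_rfl, setOf_mem_dc_castHom_eq hmn hm2 hm2,
    Set.ncard_image_of_injective _ small_injective, ncard_castHom_fiber,
    ncard_dcTriangle_image_fiber hm, show 2 * (3 * m) = 6 * m by ring, Nat.mul_div_cancel _ hm]

lemma ncard_component_Sln_three_mul (hm : 0 < m)
    (c : (cGraph (2 * (3 * m)) (Sln (3 * m) m)).ConnectedComponent) :
    Nat.card {v // (cGraph (2 * (3 * m)) (Sln (3 * m) m)).connectedComponentMk v = c} = 6 ∧
      {s | s ∈ Sln (3 * m) m ∧ ∀ v ∈ s,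
        (cGraph (2 * (3 * m)) (Sln (3 * m) m)).connectedComponentMk v = c}.ncard = 8 := by
  have : NeZero m := ⟨hm.ne'⟩
  have hmn : m ∣ 2 * (3 * m) := ⟨6, by ring⟩
  induction c using SimpleGraph.ConnectedComponent.ind with
  | _ u =>
    simp only [connectedComponentMk_Sln_eq_iff hmn]
    refine ⟨?_, ncard_Sln_triangles_castHom_eq hm hmn _⟩
    have vertices := ncard_castHom_fiber hmn (ZMod.castHom hmn (ZMod m) u)
    rwa [show 2 * (3 * m) / m = 6 by
      rw [show 2 * (3 * m) = 6 * m by ring, Nat.mul_div_cancel _ hm]] at vertices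

end ExceptionalPart

section CountingParts

lemma finite_threeDistinctParts (n : ℕ) : (threeDistinctParts n).Finite :=
  ((Set.finite_Iio n).prod (Set.finite_Iio n)).subset fun p hp => by
    obtain ⟨h₁, h₂, h₃⟩ := hp
    exact ⟨Set.mem_Iio.2 (by omega), Set.mem_Iio.2 (by omega)⟩

lemma ncard_goodPair_add (k : ℕ) :
    {p | goodPair k p}.ncard + (k - 1) / 2 = (threeDistinctParts (2 * k)).ncard := by
  set withPartK : Set (ℕ × ℕ) := (fun l => (l, k - l)) '' Set.Icc 1 ((k - 1) / 2)
  have mem_withPartK (p : ℕ × ℕ) : p ∈ withPartK ↔ 0 < p.1 ∧ p.1 < p.2 ∧ p.1 + p.2 = k := by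
    constructor
    · rintro ⟨l, ⟨h₁, h₂⟩, rfl⟩
      dsimp only
      omega
    · rintro ⟨h₁, h₂, rfl⟩
      exact ⟨p.1, ⟨h₁, by omega⟩, Prod.ext rfl (by dsimp only; omega)⟩
  have subset : withPartK ⊆ threeDistinctParts (2 * k) := fun p hp => by
    rw [mem_withPartK] at hp
    exact ⟨hp.1, hp.2.1, by omega⟩
  have goodPair_eq : {p | goodPair k p} = threeDistinctParts (2 * k) \ withPartK := by
    ext p
    simp only [goodPair, threeDistinctParts, Set.mem_ofPred_eq, Set.mem_sdiff, mem_withPartK]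
    omega
  have ncard_withPartK : withPartK.ncard = (k - 1) / 2 := by
    rw [Set.ncard_image_of_injective _ fun _ _ h => congrArg Prod.fst h, ← Finset.coe_Icc,
      Set.ncard_coe_finset, Nat.card_Icc, Nat.add_sub_cancel]
  rw [goodPair_eq, ← ncard_withPartK,
    Set.ncard_sdiff_add_ncard_of_subset subset (finite_threeDistinctParts _)]

lemma threeDistinctParts_eq_coe_sigma (m : ℕ) :
    threeDistinctParts (6 * m) =
      (((Finset.Ico 1 (2 * m)).sigma fun a => Finset.Ioo a (3 * m - a / 2)).map
        (Equiv.sigmaEquivProd ℕ ℕ).toEmbedding : Finset (ℕ × ℕ)) := by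
  ext ⟨a, b⟩
  simp only [threeDistinctParts, Set.mem_ofPred_eq, Finset.coe_map, Equiv.coe_toEmbedding,
    Set.mem_image_equiv, Finset.mem_coe, Finset.mem_sigma, Equiv.sigmaEquivProd_symm_apply,
    Finset.mem_Ico, Finset.mem_Ioo]
  omega

lemma sum_range_add_half (m : ℕ) :
    ∑ i ∈ Finset.range (2 * m + 1), (i + i / 2 + 1) = 3 * m * (m + 1) + 1 := by
  induction m with
  | zero => rfl
  | succ m ih =>
    rw [show 2 * (m + 1) + 1 = 2 * m + 1 + 1 + 1 by ring, Finset.sum_range_succ,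
      Finset.sum_range_succ, ih, show (2 * m + 1) / 2 = m by omega,
      show (2 * m + 1 + 1) / 2 = m + 1 by omega]
    ring

lemma ncard_threeDistinctParts (m : ℕ) :
    (threeDistinctParts (6 * (m + 1))).ncard = 3 * m * (m + 1) + 1 := by
  rw [threeDistinctParts_eq_coe_sigma, Set.ncard_coe_finset, Finset.card_map, Finset.card_sigma,
    Finset.sum_Ico_eq_sum_range, ← sum_range_add_half, ← Finset.sum_range_reflect]
  refine Finset.sum_congr (by congr 1) fun i hi => ?_
  rw [Finset.mem_range] at hi
  rw [Nat.card_Ioo]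
  omega

lemma ncard_goodPair_three_mul_add {m : ℕ} (hm : 0 < m) :
    {p | goodPair (3 * m) p}.ncard + ((3 * m - 1) / 2 - 1) = 3 * m * (3 * m - 3) / 3 := by
  obtain ⟨r, rfl⟩ : ∃ r, m = r + 1 := ⟨m - 1, by omega⟩
  have total := ncard_goodPair_add (3 * (r + 1))
  rw [show 2 * (3 * (r + 1)) = 6 * (r + 1) by ring, ncard_threeDistinctParts] at total
  have target : 3 * (r + 1) * (3 * (r + 1) - 3) / 3 = 3 * r * (r + 1) := by
    rw [mul_assoc, Nat.mul_div_cancel_left _ three_pos, show 3 * (r + 1) - 3 = 3 * r by omega,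
      mul_comm]
  rw [target]
  omega

end CountingParts

/-- For `k ≥ 3` with `3 ∣ k`: in the partition of `skel₂(β^k)`, the part `S_{k/3,2k}`
has `8k/3` triangles and `k/3` connected components, each with `6` vertices and `8`
triangles, while the remaining parts number `k(k−3)/3` in total and each has exactly
`4k` triangles. -/
theorem stmt_15 (k : ℕ) (hk : 3 ≤ k) (h3 : 3 ∣ k) :
    (Sln k (k / 3)).ncard = 8 * k / 3 ∧
    Nat.card (cGraph (2 * k) (Sln k (k / 3))).ConnectedComponent = k / 3 ∧
    (∀ c : (cGraph (2 * k) (Sln k (k / 3))).ConnectedComponent,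
      Nat.card {v : ZMod (2 * k) //
        (cGraph (2 * k) (Sln k (k / 3))).connectedComponentMk v = c} = 6 ∧
      {s | s ∈ Sln k (k / 3) ∧
        ∀ v ∈ s, (cGraph (2 * k) (Sln k (k / 3))).connectedComponentMk v = c}.ncard = 8) ∧
    {p : ℕ × ℕ | goodPair k p}.ncard + ((k - 1) / 2 - 1) = k * (k - 3) / 3 ∧
    (∀ p : ℕ × ℕ, goodPair k p → (Sljn k p.1 p.2).ncard = 4 * k) ∧
    (∀ l : ℕ, goodL k l → l ≠ k / 3 → (Sln k l).ncard = 4 * k) := by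
  obtain ⟨m, rfl⟩ := h3
  have hm : 0 < m := by omega
  rw [Nat.mul_div_cancel_left m three_pos]
  refine ⟨?_, card_connectedComponent_Sln_three_mul, ncard_component_Sln_three_mul hm,
    ncard_goodPair_three_mul_add hm, ?_, ?_⟩
  · rw [ncard_Sln_three_mul hm]
    omega
  · rintro p ⟨hl, hlj, hj, -⟩
    exact ncard_Sljn hl hlj hj
  · rintro l ⟨hl, hlk⟩ hne
    exact ncard_Sln_of_three_mul_ne hl (by omega) (by omega)
end
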